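/- Let A be a cyclic cellular algebra and λ ∈ Λ_n^Γ a Γ-multipartition of n with α = α(λ). If s is a standard λ-tableau, v ∈ V^α, and π ∈ 𝔖_n, then in A ≀ 𝔖_n, π · m^λ_{(s,v),(t^λ,1)} = x₁ + x₂ where x₁ is an R-linear combination of elements m^λ_{(u,v'),(t^λ,1)} with u a standard λ-tableau and v' ∈ V^α, and x₂ ∈ N̄^λ, the span of elements m^μ_{(s',v'),(t',w')} over μ ∈ Λ_n^Γ with μ ▷_Γ λ. -/

import Mathlib

open scoped TensorProduct

/-- A cell datum (Graham–Lehrer cellular basis, in the weak form of Definition 2.1):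
an `R`-linear algebra involution `star`, a poset `Γ`, finite index sets `T γ`, and a basis
`c γ s t` satisfying the cellular multiplication rule (modulo the span `Ā^γ` of the basis
elements `c μ u w` with `μ > γ`) and the cellular involution rule. -/
structure CellDatum (R : Type*) [CommRing R] (A : Type*) [Ring A] [Algebra R A]
    (Γ : Type*) [PartialOrder Γ] (T : Γ → Type*) [∀ γ, Fintype (T γ)] where
  star : A →ₗ[R] A
  star_mul : ∀ a b : A, star (a * b) = star b * star a
  star_star : ∀ a : A, star (star a) = a
  c : (γ : Γ) → T γ → T γ → A
  indep : LinearIndependent R fun p : Σ γ : Γ, T γ × T γ => c p.1 p.2.1 p.2.2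
  span_top : Submodule.span R (Set.range fun p : Σ γ : Γ, T γ × T γ => c p.1 p.2.1 p.2.2) = ⊤
  mult : ∀ (γ : Γ) (s : T γ) (a : A), ∃ r : T γ → R, ∀ t : T γ,
    a * c γ s t - ∑ v : T γ, r v • c γ v t ∈
      Submodule.span R {x : A | ∃ μ : Γ, γ < μ ∧ ∃ u w : T μ, x = c μ u w}
  star_c : ∀ (γ : Γ) (s t : T γ),
    star (c γ s t) - c γ t s ∈
      Submodule.span R {x : A | ∃ μ : Γ, γ < μ ∧ ∃ u w : T μ, x = c μ u w}

namespace CellDatum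

variable {R : Type*} [CommRing R] {A : Type*} [Ring A] [Algebra R A]
  {Γ : Type*} [PartialOrder Γ] {T : Γ → Type*} [∀ γ, Fintype (T γ)]

/-- The ideal `Ā^γ`, spanned by the basis elements `c μ u w` with `μ > γ`. -/
def Abar (D : CellDatum R A Γ T) (γ : Γ) : Submodule R A :=
  Submodule.span R {x : A | ∃ μ : Γ, γ < μ ∧ ∃ u w : T μ, x = D.c μ u w}

/-- The ideal `A^γ`, spanned by the basis elements `c μ u w` with `μ ≥ γ`. -/
def Aup (D : CellDatum R A Γ T) (γ : Γ) : Submodule R A :=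
  Submodule.span R {x : A | ∃ μ : Γ, γ ≤ μ ∧ ∃ u w : T μ, x = D.c μ u w}

end CellDatum

/-- `e : T γ → M` exhibits the `A`-module `M` as (a copy of) the cell module `Δ^γ`:
`e` is an `R`-basis of `M`, and `A` acts on it by the structure coefficients of the cellular
basis. -/
def IsCellModule {R : Type*} [CommRing R] {A : Type*} [Ring A] [Algebra R A]
    {Γ : Type*} [PartialOrder Γ] {T : Γ → Type*} [∀ γ, Fintype (T γ)]
    (D : CellDatum R A Γ T) (γ : Γ) (M : Type*) [AddCommGroup M] [Module R M]
    [Module A M] [IsScalarTower R A M] (e : T γ → M) : Prop :=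
  LinearIndependent R e ∧ Submodule.span R (Set.range e) = ⊤ ∧
    ∀ (a : A) (s : T γ) (r : T γ → R),
      (∀ t : T γ, a * D.c γ s t - ∑ v : T γ, r v • D.c γ v t ∈ D.Abar γ) →
      a • e s = ∑ v : T γ, r v • e v

open scoped Classical

/-- The cells of a multipartition `lam = (λ⁽¹⁾, …, λ⁽ʳ⁾)` (partitions as Young diagrams). -/
def MCells {r : ℕ} (lam : Fin r → YoungDiagram) : Type :=
  (k : Fin r) × {c : ℕ × ℕ // c ∈ (lam k).cells}

noncomputable instance {r : ℕ} (lam : Fin r → YoungDiagram) : Fintype (MCells lam) := by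
  unfold MCells; infer_instance

/-- A `λ`-tableau (a bijective filling of the cells of `λ` with `0, …, n-1`) is
*superstandard* (`t^λ`) if its entries increase in the lexicographic order on
(component, row, column). -/
def IsSuperstandard {r n : ℕ} {lam : Fin r → YoungDiagram}
    (tl : MCells lam ≃ Fin n) : Prop :=
  ∀ x y : MCells lam, tl x ≤ tl y ↔
    (x.1 < y.1 ∨ (x.1 = y.1 ∧ ((x.2 : ℕ × ℕ).1 < (y.2 : ℕ × ℕ).1 ∨
      ((x.2 : ℕ × ℕ).1 = (y.2 : ℕ × ℕ).1 ∧ (x.2 : ℕ × ℕ).2 ≤ (y.2 : ℕ × ℕ).2))))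

/-- A `λ`-tableau is *standard* if within each component its entries increase along rows and
columns. -/
def IsStdTableau {r n : ℕ} {lam : Fin r → YoungDiagram}
    (S : MCells lam ≃ Fin n) : Prop :=
  ∀ x y : MCells lam, x.1 = y.1 → (x.2 : ℕ × ℕ).1 ≤ (y.2 : ℕ × ℕ).1 →
    (x.2 : ℕ × ℕ).2 ≤ (y.2 : ℕ × ℕ).2 → x ≠ y → S x < S y

/-- A `λ`-tableau is *row standard* if within each component its entries increase along
rows. -/
def IsRowStdTableau {r n : ℕ} {lam : Fin r → YoungDiagram}
    (S : MCells lam ≃ Fin n) : Prop :=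
  ∀ x y : MCells lam, x.1 = y.1 → (x.2 : ℕ × ℕ).1 = (y.2 : ℕ × ℕ).1 →
    (x.2 : ℕ × ℕ).2 ≤ (y.2 : ℕ × ℕ).2 → S x ≤ S y

/-- The permutation `d(S)` with `S = d(S) · t^λ`. -/
def dperm {r n : ℕ} {lam : Fin r → YoungDiagram}
    (tl S : MCells lam ≃ Fin n) : Equiv.Perm (Fin n) :=
  tl.symm.trans S

/-- The Young subgroup `𝔖_λ`: the row stabilizer of the tableau `t^λ`. -/
noncomputable def rowStab {r n : ℕ} {lam : Fin r → YoungDiagram}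
    (tl : MCells lam ≃ Fin n) : Finset (Equiv.Perm (Fin n)) :=
  Finset.univ.filter fun σ => ∀ x : MCells lam,
    (tl.symm (σ (tl x))).1 = x.1 ∧
      ((tl.symm (σ (tl x))).2 : ℕ × ℕ).1 = ((x.2 : ℕ × ℕ)).1

/-- Dominance order on multipartitions relative to a listing `l` of the poset `Γ`
(`Γ`-dominance). -/
def GDomL {Γ : Type*} [PartialOrder Γ] {r : ℕ} (l : Fin r → Γ)
    (lam mu : Fin r → YoungDiagram) : Prop :=
  ∀ (k : Fin r) (j : ℕ),
    ((∑ k' ∈ Finset.univ.filter (fun k' => l k < l k'), (mu k').card)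
        + ∑ i ∈ Finset.range j, (mu k).rowLen i)
      ≤ (∑ k' ∈ Finset.univ.filter (fun k' => l k < l k'), (lam k').card)
        + ∑ i ∈ Finset.range j, (lam k).rowLen i

section Wreath

variable {R : Type*} [CommRing R] {A : Type*} [Ring A] [Algebra R A]
  {n : ℕ} {W : Type*} [Ring W] [Algebra R W]

/-- The element `(a₁ ⊗ ⋯ ⊗ aₙ) π` of the wreath product `A ≀ 𝔖_n`, realized inside the
`R`-algebra `W` via the linear isomorphism `φ` with `A^{⊗n} ⊗ R[𝔖_n]`. -/
noncomputable def wm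
    (φ : ((⨂[R] _ : Fin n, A) ⊗[R] (Equiv.Perm (Fin n) →₀ R)) ≃ₗ[R] W)
    (a : Fin n → A) (π : Equiv.Perm (Fin n)) : W :=
  φ ((PiTensorProduct.tprod R a) ⊗ₜ[R] Finsupp.single π (1 : R))

variable (φ : ((⨂[R] _ : Fin n, A) ⊗[R] (Equiv.Perm (Fin n) →₀ R)) ≃ₗ[R] W)

/-- The image in `W` of a permutation `π ∈ 𝔖_n`. -/
noncomputable def sElt (π : Equiv.Perm (Fin n)) : W := wm φ (fun _ => 1) π

/-- The element `y^α = y_{γ(α)₁} ⊗ ⋯ ⊗ y_{γ(α)ₙ}` of `A^{⊗n} ⊂ A ≀ 𝔖_n`, the tensor factor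
at position `i` being indexed by the component of `i` in `t^λ`. -/
noncomputable def yaElt {Γ : Type*} {r : ℕ} {lam : Fin r → YoungDiagram}
    (y : Γ → A) (l : Fin r → Γ) (tl : MCells lam ≃ Fin n) : W :=
  wm φ (fun i => y (l (tl.symm i).1)) 1

/-- An element `v ∈ V^α ⊂ A^{⊗n}`, given by a labelling `τ` of the cells of `λ` by elements
of the corresponding index sets. -/
noncomputable def vElt {Γ : Type*} {T : Γ → Type*} {r : ℕ} {lam : Fin r → YoungDiagram}
    (vv : (γ : Γ) → T γ → A) (l : Fin r → Γ) (tl : MCells lam ≃ Fin n)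
    (τ : ∀ x : MCells lam, T (l x.1)) : W :=
  wm φ (fun i => vv (l (tl.symm i).1) (τ (tl.symm i))) 1

/-- The element `x_λ = ∑_{σ ∈ 𝔖_λ} σ`. -/
noncomputable def xlamElt {r : ℕ} {lam : Fin r → YoungDiagram}
    (tl : MCells lam ≃ Fin n) : W :=
  ∑ σ ∈ rowStab tl, sElt φ σ

end Wreath

/-- The Murphy-type element `m^μ_{(U,τ),(U',τ')} = d(U) v_τ y^α x_μ v_{τ'}* d(U')*` of the
wreath product, relative to a superstandard tableau `tm` of `μ`. -/
noncomputable def mwElt {R : Type*} [CommRing R] {A : Type*} [Ring A] [Algebra R A]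
    {n : ℕ} {W : Type*} [Ring W] [Algebra R W]
    (φ : ((⨂[R] _ : Fin n, A) ⊗[R] (Equiv.Perm (Fin n) →₀ R)) ≃ₗ[R] W)
    (starW : W →ₗ[R] W) {Γ : Type*} {T : Γ → Type*} {r : ℕ}
    (y : Γ → A) (vv : (γ : Γ) → T γ → A) (l : Fin r → Γ)
    {mu : Fin r → YoungDiagram} (tm : MCells mu ≃ Fin n)
    (U U' : MCells mu ≃ Fin n) (τ τ' : ∀ x : MCells mu, T (l x.1)) : W :=
  sElt φ (dperm tm U) * vElt φ vv l tm τ * yaElt φ y l tm * xlamElt φ tm *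
    starW (vElt φ vv l tm τ') * starW (sElt φ (dperm tm U'))

lemma perm_apply_inv {α : Type*} (g : Equiv.Perm α) (x : α) : g (g⁻¹ x) = x :=
  Equiv.apply_symm_apply g x

lemma perm_inv_apply {α : Type*} (g : Equiv.Perm α) (x : α) : g⁻¹ (g x) = x :=
  Equiv.symm_apply_apply g x

section LabelSum

variable {R W : Type*} [CommRing R] [AddCommGroup W] [Module R W] {r n : ℕ}

/-- The sum of `F g` over the permutations `g` which carry the labelling `h` of `Fin n` to the
labelling `f`. Labels are pairs (component, row). -/
noncomputable def labelSum (F : Equiv.Perm (Fin n) → W) (f h : Fin n → Fin r × ℕ) : W :=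
  ∑ g ∈ Finset.univ.filter (fun g : Equiv.Perm (Fin n) => ∀ x, f (g x) = h x), F g

/-- The ballot condition: in every initial segment, each row label of a component occurs at least
as often as the next row label of that component. -/
def IsBallot (f : Fin n → Fin r × ℕ) : Prop :=
  ∀ (m : ℕ) (k : Fin r) (i : ℕ),
    (Finset.univ.filter fun x : Fin n => (x : ℕ) < m ∧ f x = (k, i + 1)).card ≤
      (Finset.univ.filter fun x : Fin n => (x : ℕ) < m ∧ f x = (k, i)).card

/-- The number of points labelled by one of the first `j` rows of component `k`. -/
noncomputable def rowsBelow (f : Fin n → Fin r × ℕ) (k : Fin r) (j : ℕ) : ℕ :=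
  (Finset.univ.filter fun x : Fin n => (f x).1 = k ∧ (f x).2 < j).card

/-- `f'` arises from `f` by a strict raise in dominance order, keeping components fixed. -/
def IsRaise (f f' : Fin n → Fin r × ℕ) : Prop :=
  (∀ x, (f' x).1 = (f x).1) ∧ rowsBelow f < rowsBelow f' ∧ ∑ x, (f' x).2 < ∑ x, (f x).2

lemma labelSum_flip (F : Equiv.Perm (Fin n) → W) (f h : Fin n → Fin r × ℕ) :
    labelSum F f h = labelSum (fun g => F g⁻¹) h f := by
  unfold labelSum
  refine Finset.sum_nbij' (fun g => g⁻¹) (fun g => g⁻¹) ?_ ?_ ?_ ?_ ?_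
  · intro g hg
    simp only [Finset.mem_filter, Finset.mem_univ, true_and] at hg ⊢
    intro x
    rw [← hg, perm_apply_inv]
  · intro g hg
    simp only [Finset.mem_filter, Finset.mem_univ, true_and] at hg ⊢
    intro x
    rw [← hg, perm_apply_inv]
  · simp
  · simp
  · simp

lemma labelSum_eq_zero (F : Equiv.Perm (Fin n) → W) {f h : Fin n → Fin r × ℕ}
    (hfh : ¬ ∃ g : Equiv.Perm (Fin n), ∀ x, f (g x) = h x) : labelSum F f h = 0 := by
  unfold labelSum
  rw [Finset.filter_false_of_mem, Finset.sum_empty]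
  intro g _ hg
  exact hfh ⟨g, hg⟩

lemma sum_mem_of_fibers {ι : Type*} [DecidableEq ι] (N : Submodule R W) (F : Equiv.Perm (Fin n) → W)
    (P : Equiv.Perm (Fin n) → Prop) [DecidablePred P] (q : Equiv.Perm (Fin n) → ι)
    (hP : ∀ g g', q g = q g' → P g → P g')
    (hN : ∀ g₀, P g₀ → ∑ g ∈ Finset.univ.filter (fun g => q g = q g₀), F g ∈ N) :
    ∑ g ∈ Finset.univ.filter P, F g ∈ N := by
  rw [← Finset.sum_fiberwise_of_maps_to
    (fun g hg => Finset.mem_image_of_mem q hg : ∀ g ∈ Finset.univ.filter P,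
      q g ∈ (Finset.univ.filter P).image q)]
  refine Submodule.sum_mem _ fun y hy => ?_
  obtain ⟨g₀, hg₀, rfl⟩ := Finset.mem_image.1 hy
  have h₀ : P g₀ := (Finset.mem_filter.1 hg₀).2
  convert hN g₀ h₀ using 2
  ext g
  simp only [Finset.mem_filter, Finset.mem_univ, true_and, and_iff_right_iff_imp]
  exact fun h => hP _ _ h.symm h₀

lemma rowsBelow_comp_perm {f h : Fin n → Fin r × ℕ} {g : Equiv.Perm (Fin n)}
    (hg : ∀ x, f (g x) = h x) : rowsBelow f = rowsBelow h := by
  funext k j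
  unfold rowsBelow
  refine (Finset.card_bij (fun x _ => g x) ?_ ?_ ?_).symm
  · intro x hx
    simpa [hg] using hx
  · intro x _ y _ h
    exact g.injective h
  · intro y hy
    refine ⟨g⁻¹ y, ?_, by simp⟩
    simpa [← hg] using hy

lemma sum_row_comp_perm {f h : Fin n → Fin r × ℕ} {g : Equiv.Perm (Fin n)}
    (hg : ∀ x, f (g x) = h x) : ∑ x, (f x).2 = ∑ x, (h x).2 := by
  simp only [← hg]
  exact (Equiv.sum_comp g fun x => (f x).2).symm

/-- Merging rows `i` and `i + 1` of component `k` and then pushing the points of `S` to row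
`i + 1` raises the labelling when `S` is smaller than the original row `i + 1`. -/
lemma isRaise_of_card_lt (f : Fin n → Fin r × ℕ) (k : Fin r) (i : ℕ) (S : Finset (Fin n))
    (hS : ∀ x ∈ S, f x = (k, i) ∨ f x = (k, i + 1))
    (hcard : S.card < (Finset.univ.filter fun x => f x = (k, i + 1)).card) :
    IsRaise f (fun x => if f x = (k, i) ∨ f x = (k, i + 1) then
      (if x ∈ S then (k, i + 1) else (k, i)) else f x) := by
  set f' : Fin n → Fin r × ℕ := fun x => if f x = (k, i) ∨ f x = (k, i + 1) then
      (if x ∈ S then (k, i + 1) else (k, i)) else f x with hf'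
  have hScard : S.card = ∑ x, if x ∈ S then 1 else 0 := by simp
  have hqcard : (Finset.univ.filter fun x => f x = (k, i + 1)).card
      = ∑ x, if f x = (k, i + 1) then 1 else 0 := Finset.card_filter _ _
  have hcomp : ∀ x, (f' x).1 = (f x).1 := by
    intro x
    simp only [hf']
    split_ifs with h1 h2
    · rcases h1 with h | h <;> simp [h]
    · rcases h1 with h | h <;> simp [h]
    · rfl
  have hne : ∀ k' j, (k', j) ≠ (k, i + 1) → rowsBelow f k' j = rowsBelow f' k' j := by
    intro k' j hkj
    unfold rowsBelow
    congr 1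
    ext x
    simp only [Finset.mem_filter, Finset.mem_univ, true_and, hcomp]
    refine and_congr_right fun hk => ?_
    simp only [hf']
    have hj : k = k' → j ≠ i + 1 := fun h1 h2 => hkj (by rw [h1, h2])
    split_ifs with h1 h2
    · rcases h1 with h | h <;> grind
    · rcases h1 with h | h <;> grind
    · rfl
  have hlt : rowsBelow f k (i + 1) < rowsBelow f' k (i + 1) := by
    have key : rowsBelow f k (i + 1) + (Finset.univ.filter fun x => f x = (k, i + 1)).card
        = rowsBelow f' k (i + 1) + S.card := by
      rw [hScard, hqcard]
      unfold rowsBelow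
      rw [Finset.card_filter, Finset.card_filter, ← Finset.sum_add_distrib,
        ← Finset.sum_add_distrib]
      refine Finset.sum_congr rfl fun x _ => ?_
      by_cases h1 : f x = (k, i) ∨ f x = (k, i + 1)
      · by_cases h2 : x ∈ S
        · rcases h1 with h | h <;> simp [hf', h, h2]
        · rcases h1 with h | h <;> simp [hf', h, h2]
      · have h2 : x ∉ S := fun h => h1 (hS x h)
        simp only [hf', if_neg h1, if_neg h2]
        rw [if_neg (fun h => h1 (Or.inr h))]
    omega
  refine ⟨hcomp, ?_, ?_⟩
  · refine lt_of_le_of_ne ?_ fun h => hlt.ne (congrFun (congrFun h k) (i + 1))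
    intro k' j
    by_cases hkj : (k', j) = (k, i + 1)
    · obtain ⟨rfl, rfl⟩ := Prod.mk.inj hkj
      exact hlt.le
    · exact (hne k' j hkj).le
  · have key : ∑ x, (f x).2 + S.card
        = ∑ x, (f' x).2 + (Finset.univ.filter fun x => f x = (k, i + 1)).card := by
      rw [hScard, hqcard, ← Finset.sum_add_distrib, ← Finset.sum_add_distrib]
      refine Finset.sum_congr rfl fun x _ => ?_
      by_cases h1 : f x = (k, i) ∨ f x = (k, i + 1)
      · by_cases h2 : x ∈ S
        · rcases h1 with h | h <;> simp [hf', h, h2]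
        · rcases h1 with h | h <;> simp [hf', h, h2]
      · have h2 : x ∉ S := fun h => h1 (hS x h)
        simp only [hf', if_neg h1, if_neg h2]
        rw [if_neg (fun h => h1 (Or.inr h))]
    change ∑ x, (f' x).2 < ∑ x, (f x).2
    omega

/-- The Garnir-type relation: the sum over all redistributions of rows `i`, `i + 1` of component
`k` which put `S` in row `i + 1` and `Q` in row `i` is a combination of raised sums. -/
lemma garnir_mem (N : Submodule R W) (F : Equiv.Perm (Fin n) → W) (f h : Fin n → Fin r × ℕ)
    (k : Fin r) (i : ℕ)
    (hN : ∀ f' h', IsRaise f f' → (∀ x, (h' x).1 = (h x).1) → labelSum F f' h' ∈ N)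
    (Q : Finset (Fin n)) :
    ∀ S : Finset (Fin n), (∀ x ∈ S, f x = (k, i) ∨ f x = (k, i + 1)) →
    (∀ x ∈ Q, f x = (k, i) ∨ f x = (k, i + 1)) →
    S.card + Q.card < (Finset.univ.filter fun x => f x = (k, i + 1)).card →
    ∑ g ∈ Finset.univ.filter (fun g : Equiv.Perm (Fin n) =>
      (∀ x, if f x = (k, i) ∨ f x = (k, i + 1) then
        (h (g⁻¹ x) = (k, i) ∨ h (g⁻¹ x) = (k, i + 1)) else h (g⁻¹ x) = f x) ∧
      (∀ x ∈ S, h (g⁻¹ x) = (k, i + 1)) ∧ (∀ x ∈ Q, h (g⁻¹ x) = (k, i))), F g ∈ N := by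
  have hpq : ((k, i) : Fin r × ℕ) ≠ (k, i + 1) := by simp
  induction Q using Finset.induction_on with
  | empty =>
    intro S hS _ hcard
    have hraise := isRaise_of_card_lt f k i S hS (by simpa using hcard)
    set f' : Fin n → Fin r × ℕ := fun x => if f x = (k, i) ∨ f x = (k, i + 1) then
      (if x ∈ S then (k, i + 1) else (k, i)) else f x with hf'
    have hP : ∀ g : Equiv.Perm (Fin n),
        ((∀ x, if f x = (k, i) ∨ f x = (k, i + 1) then
          (h (g⁻¹ x) = (k, i) ∨ h (g⁻¹ x) = (k, i + 1)) else h (g⁻¹ x) = f x) ∧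
        (∀ x ∈ S, h (g⁻¹ x) = (k, i + 1)) ∧
        (∀ x ∈ (∅ : Finset (Fin n)), h (g⁻¹ x) = (k, i))) ↔
        ∀ z, h z = (f' ∘ g) z ∨ ((f' ∘ g) z = (k, i) ∧ h z = (k, i + 1)) := by
      intro g
      constructor
      · rintro ⟨h1, h2, -⟩ z
        have h1z := h1 (g z)
        have h2z := h2 (g z)
        simp only [perm_inv_apply] at h1z h2z
        simp only [Function.comp_apply, hf']
        split_ifs at h1z ⊢ with a b
        · exact Or.inl (h2z b)
        · tauto
        · exact Or.inl h1z
      · intro hz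
        refine ⟨fun x => ?_, fun x hx => ?_, by simp⟩
        · have := hz (g⁻¹ x)
          simp only [Function.comp_apply, perm_apply_inv, hf'] at this
          split_ifs at this ⊢ with a b
          · tauto
          · tauto
          · rcases this with h | h
            · exact h
            · exact absurd (Or.inl h.1) a
        · have := hz (g⁻¹ x)
          simp only [Function.comp_apply, perm_apply_inv, hf', if_pos (hS x hx),
            if_pos hx] at this
          rcases this with h | h
          · exact h
          · exact h.2
    rw [Finset.filter_congr (fun g _ => hP g)]
    refine sum_mem_of_fibers N F _ (fun g => f' ∘ g) ?_ ?_
    · intro g g' hgg hz z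
      rw [← hgg]
      exact hz z
    · intro g₀ hg₀
      have := hN f' (f' ∘ g₀) hraise ?_
      · unfold labelSum at this
        convert this using 3 with g
        exact funext_iff
      · intro x
        rcases hg₀ x with h | h
        · rw [h]
        · rw [h.1, h.2]
  | insert x Q hx ih =>
    intro S hS hQ hcard
    rw [Finset.card_insert_of_notMem hx] at hcard
    have hxr := hQ x (Finset.mem_insert_self _ _)
    have hQ' : ∀ x ∈ Q, f x = (k, i) ∨ f x = (k, i + 1) :=
      fun z hz => hQ z (Finset.mem_insert_of_mem hz)
    have h1 := ih S hS hQ' (by omega)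
    have h2 := ih (insert x S)
      (fun z hz => (Finset.mem_insert.1 hz).elim (fun e => e ▸ hxr) (hS z)) hQ'
      (by have := Finset.card_insert_le x S; omega)
    rw [← Finset.sum_filter_add_sum_filter_not _ (fun g => h (g⁻¹ x) = (k, i)),
      Finset.filter_filter, Finset.filter_filter] at h1
    have e1 : ∀ g : Equiv.Perm (Fin n), ((((∀ x, if f x = (k, i) ∨ f x = (k, i + 1) then
        (h (g⁻¹ x) = (k, i) ∨ h (g⁻¹ x) = (k, i + 1)) else h (g⁻¹ x) = f x) ∧
        (∀ x ∈ S, h (g⁻¹ x) = (k, i + 1)) ∧ (∀ x ∈ Q, h (g⁻¹ x) = (k, i))) ∧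
        ¬ h (g⁻¹ x) = (k, i)) ↔
        ((∀ x, if f x = (k, i) ∨ f x = (k, i + 1) then
        (h (g⁻¹ x) = (k, i) ∨ h (g⁻¹ x) = (k, i + 1)) else h (g⁻¹ x) = f x) ∧
        (∀ z ∈ insert x S, h (g⁻¹ z) = (k, i + 1)) ∧ (∀ x ∈ Q, h (g⁻¹ x) = (k, i)))) := by
      intro g
      simp only [Finset.forall_mem_insert]
      constructor
      · rintro ⟨⟨a, b, c⟩, d⟩
        have := a x
        rw [if_pos hxr] at this
        exact ⟨a, ⟨this.resolve_left d, b⟩, c⟩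
      · rintro ⟨a, ⟨b, c⟩, d⟩
        exact ⟨⟨a, c, d⟩, fun e => hpq (e.symm.trans b)⟩
    rw [Finset.filter_congr (fun g _ => e1 g)] at h1
    have h3 := (Submodule.add_mem_iff_left N h2).1 h1
    convert h3 using 3 with g
    simp only [Finset.forall_mem_insert]
    tauto

lemma isRaise_of_comp_perm {f h f' : Fin n → Fin r × ℕ} {g : Equiv.Perm (Fin n)}
    (hg : ∀ x, f (g x) = h x) (hcomp : ∀ x, (h x).1 = (f x).1) (hr : IsRaise h f') :
    IsRaise f f' :=
  ⟨fun x => (hr.1 x).trans (hcomp x), rowsBelow_comp_perm hg ▸ hr.2.1,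
    sum_row_comp_perm hg ▸ hr.2.2⟩

/-- Straightening of the left labelling: modulo raised sums, every sum is a combination of sums
whose left labelling is ballot and whose right labelling is unchanged. -/
lemma labelSum_mem_of_left (N : Submodule R W) (F : Equiv.Perm (Fin n) → W)
    (h : Fin n → Fin r × ℕ) (f : Fin n → Fin r × ℕ)
    (hb : ∀ f', IsBallot f' → (∀ x, (f' x).1 = (f x).1) →
      (∃ g : Equiv.Perm (Fin n), ∀ x, f' (g x) = h x) → labelSum F f' h ∈ N)
    (hN : ∀ f' h', IsRaise f f' → (∀ x, (h' x).1 = (h x).1) → labelSum F f' h' ∈ N) :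
    labelSum F f h ∈ N := by
  induction hd : 2 * n * ∑ x, (f x).2 - ∑ x : Fin n, (x : ℕ) * (f x).2
    using Nat.strong_induction_on generalizing f with
  | _ d ih =>
    by_cases hfh : ∃ g : Equiv.Perm (Fin n), ∀ x, f (g x) = h x
    swap
    · rw [labelSum_eq_zero F hfh]
      exact N.zero_mem
    by_cases hfb : IsBallot f
    · exact hb f hfb (fun _ => rfl) hfh
    obtain ⟨g₁, hg₁⟩ := hfh
    simp only [IsBallot, not_forall, not_le] at hfb
    obtain ⟨m, k, i, hlt⟩ := hfb
    have hpq : ((k, i) : Fin r × ℕ) ≠ (k, i + 1) := by simp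
    set S : Finset (Fin n) := Finset.univ.filter fun x => m ≤ (x : ℕ) ∧ f x = (k, i + 1) with hS
    set Q : Finset (Fin n) := Finset.univ.filter fun x => (x : ℕ) < m ∧ f x = (k, i) with hQ
    have hcard : S.card + Q.card < (Finset.univ.filter fun x => f x = (k, i + 1)).card := by
      have : S.card + (Finset.univ.filter fun x : Fin n => (x : ℕ) < m ∧ f x = (k, i + 1)).card
          = (Finset.univ.filter fun x => f x = (k, i + 1)).card := by
        rw [hS, Finset.card_filter, Finset.card_filter, Finset.card_filter,
          ← Finset.sum_add_distrib]
        refine Finset.sum_congr rfl fun x _ => ?_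
        by_cases h1 : f x = (k, i + 1) <;> by_cases h2 : (x : ℕ) < m
        · simp [h1, h2]
        · simp [h1, h2, not_lt.1 h2]
        · simp [h1]
        · simp [h1]
      omega
    have hsum := garnir_mem N F f h k i hN Q S
      (fun x hx => Or.inr (Finset.mem_filter.1 hx).2.2)
      (fun x hx => Or.inl (Finset.mem_filter.1 hx).2.2) hcard
    rw [← Finset.sum_filter_add_sum_filter_not _ (fun g : Equiv.Perm (Fin n) => f = h ∘ ⇑g⁻¹),
      Finset.filter_filter, Finset.filter_filter] at hsum
    have hself : ∀ g : Equiv.Perm (Fin n), (∀ x, f (g x) = h x) ↔ f = h ∘ ⇑g⁻¹ := by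
      intro g
      constructor
      · intro hg
        funext x
        rw [Function.comp_apply, ← hg, perm_apply_inv]
      · intro hg x
        rw [hg, Function.comp_apply, perm_inv_apply]
    have hmain : labelSum F f h = ∑ g ∈ Finset.univ.filter (fun g : Equiv.Perm (Fin n) =>
        ((∀ x, if f x = (k, i) ∨ f x = (k, i + 1) then
          (h (g⁻¹ x) = (k, i) ∨ h (g⁻¹ x) = (k, i + 1)) else h (g⁻¹ x) = f x) ∧
        (∀ x ∈ S, h (g⁻¹ x) = (k, i + 1)) ∧ (∀ x ∈ Q, h (g⁻¹ x) = (k, i))) ∧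
        f = h ∘ ⇑g⁻¹), F g := by
      unfold labelSum
      refine Finset.sum_congr (Finset.filter_congr fun g _ => ?_) fun _ _ => rfl
      rw [hself]
      refine ⟨fun hg => ⟨⟨fun x => ?_, fun x hx => ?_, fun x hx => ?_⟩, hg⟩, fun hg => hg.2⟩
      · have := congrFun hg x
        rw [Function.comp_apply] at this
        rw [← this]
        split_ifs with h1
        · exact h1
        · rfl
      · exact (congrFun hg x).symm.trans (Finset.mem_filter.1 hx).2.2
      · exact (congrFun hg x).symm.trans (Finset.mem_filter.1 hx).2.2
    rw [hmain]
    refine (Submodule.add_mem_iff_left N ?_).1 hsum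
    refine sum_mem_of_fibers N F _ (fun g => h ∘ ⇑g⁻¹) ?_ ?_
    · intro g g' hgg hg
      have e : ∀ x, h (g⁻¹ x) = h (g'⁻¹ x) := congrFun hgg
      simp only [e] at hg
      exact ⟨hg.1, fun hf => hg.2 (hf.trans hgg.symm)⟩
    · rintro g₀ ⟨⟨hc, hSg, hQg⟩, hne⟩
      set f' : Fin n → Fin r × ℕ := h ∘ ⇑g₀⁻¹ with hf'
      have hsum' : ∑ g ∈ Finset.univ.filter (fun g : Equiv.Perm (Fin n) => h ∘ ⇑g⁻¹ = f'), F g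
          = labelSum F f' h := by
        unfold labelSum
        refine Finset.sum_congr (Finset.filter_congr fun g _ => ?_) fun _ _ => rfl
        constructor
        · intro hg x
          rw [← hg, Function.comp_apply, perm_inv_apply]
        · intro hg
          funext x
          rw [Function.comp_apply, ← hg, perm_apply_inv]
      rw [hsum']
      have hcomp : ∀ x, (f' x).1 = (f x).1 := by
        intro x
        have := hc x
        change (h (g₀⁻¹ x)).1 = _
        split_ifs at this with h1
        · rcases h1 with h1 | h1 <;> rcases this with h2 | h2 <;> rw [h1, h2]
        · rw [this]
      have hperm : ∀ x, f ((g₁ * g₀⁻¹) x) = f' x := fun x => hg₁ (g₀⁻¹ x)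
      have hrow := sum_row_comp_perm hperm
      have hbound : ∀ f₂ : Fin n → Fin r × ℕ,
          ∑ x : Fin n, (x : ℕ) * (f₂ x).2 ≤ n * ∑ x, (f₂ x).2 := by
        intro f₂
        rw [Finset.mul_sum]
        exact Finset.sum_le_sum fun x _ => Nat.mul_le_mul_right _ x.2.le
      have hlt' : ∑ x : Fin n, (x : ℕ) * (f x).2 < ∑ x : Fin n, (x : ℕ) * (f' x).2 := by
        have hle : ∀ x : Fin n, (f' x).2 ≠ (f x).2 →
            0 < (2 * (x : ℤ) + 1 - 2 * m) * (((f' x).2 : ℤ) - ((f x).2 : ℤ)) := by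
          intro x hx
          have hcx := hc x
          change if _ then (f' x = _ ∨ f' x = _) else f' x = _ at hcx
          split_ifs at hcx with h1
          · by_cases hm : (x : ℕ) < m
            · have h3 : f x ≠ (k, i) := by
                intro h3
                have : f' x = (k, i) := hQg x (by simp [hQ, hm, h3])
                exact hx (by rw [this, h3])
              have h4 := h1.resolve_left h3
              have h5 : f' x = (k, i) := hcx.resolve_right fun h5 => hx (by rw [h5, h4])
              rw [h4, h5]
              push_cast
              nlinarith
            · have h3 : f x ≠ (k, i + 1) := by
                intro h3
                have : f' x = (k, i + 1) := hSg x (by simp [hS, not_lt.1 hm, h3])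
                exact hx (by rw [this, h3])
              have h4 := h1.resolve_right h3
              have h5 : f' x = (k, i + 1) := hcx.resolve_left fun h5 => hx (by rw [h5, h4])
              rw [h4, h5]
              push_cast
              nlinarith
          · exact absurd (by rw [hcx]) hx
        obtain ⟨x₀, hx₀⟩ : ∃ x, (f' x).2 ≠ (f x).2 := by
          by_contra! hall
          exact hne (funext fun x => (Prod.ext (hcomp x) (hall x)).symm)
        have hpos : 0 < ∑ x : Fin n,
            (2 * (x : ℤ) + 1 - 2 * m) * (((f' x).2 : ℤ) - ((f x).2 : ℤ)) := by
          refine Finset.sum_pos' (fun x _ => ?_) ⟨x₀, Finset.mem_univ _, hle x₀ hx₀⟩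
          by_cases hx : (f' x).2 = (f x).2
          · simp [hx]
          · exact (hle x hx).le
        have hsplit : ∑ x : Fin n, (2 * (x : ℤ) + 1 - 2 * m) * (((f' x).2 : ℤ) - ((f x).2 : ℤ))
            = 2 * (∑ x : Fin n, (x : ℤ) * (f' x).2 - ∑ x : Fin n, (x : ℤ) * (f x).2)
              + (1 - 2 * m) * (∑ x, ((f' x).2 : ℤ) - ∑ x, ((f x).2 : ℤ)) := by
          rw [← Finset.sum_sub_distrib, ← Finset.sum_sub_distrib, Finset.mul_sum,
            Finset.mul_sum, ← Finset.sum_add_distrib]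
          exact Finset.sum_congr rfl fun x _ => by ring
        have hrow' : ∑ x, ((f x).2 : ℤ) = ∑ x, ((f' x).2 : ℤ) := by exact_mod_cast hrow
        rw [hsplit, hrow', sub_self, mul_zero, add_zero] at hpos
        zify
        linarith
      refine ih _ ?_ f' (fun f₂ hf₂ hf₂c => hb f₂ hf₂ fun x => (hf₂c x).trans (hcomp x))
        (fun f₂ h₂ hr => hN f₂ h₂ (isRaise_of_comp_perm hperm hcomp hr)) rfl
      have b1 := hbound f'
      rw [← hd, ← hrow]
      rw [← hrow] at b1
      have : 2 * n * ∑ x, (f x).2 = n * ∑ x, (f x).2 + n * ∑ x, (f x).2 := by ring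
      omega

/-- Every sum is a combination of sums with both labellings ballot and weakly more dominant. -/
lemma labelSum_mem_of_ballot (N : Submodule R W) (F : Equiv.Perm (Fin n) → W)
    (f h : Fin n → Fin r × ℕ)
    (hb : ∀ f' h', IsBallot f' → IsBallot h' → (∀ x, (f' x).1 = (f x).1) →
      (∀ x, (h' x).1 = (h x).1) → rowsBelow f ≤ rowsBelow f' →
      (∃ g : Equiv.Perm (Fin n), ∀ x, f' (g x) = h' x) → labelSum F f' h' ∈ N) :
    labelSum F f h ∈ N := by
  induction hd : ∑ x, (f x).2 using Nat.strong_induction_on generalizing f h with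
  | _ d ih =>
    by_cases hfh : ∃ g : Equiv.Perm (Fin n), ∀ x, f (g x) = h x
    swap
    · rw [labelSum_eq_zero F hfh]
      exact N.zero_mem
    obtain ⟨g₀, hg₀⟩ := hfh
    refine labelSum_mem_of_left N F h f (fun f' hf' hf'c ⟨g', hg'⟩ => ?_) fun f' h' hr hh' => ?_
    · rw [labelSum_flip]
      refine labelSum_mem_of_left N _ f' h (fun h' hh' hh'c ⟨g₁, hg₁⟩ => ?_)
        fun h' f'' hr hf'' => ?_
      · have hg₁' : ∀ x, f' (g₁⁻¹ x) = h' x := fun x => by rw [← hg₁, perm_apply_inv]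
        have e := labelSum_flip (fun g => F g⁻¹) h' f'
        simp only [inv_inv] at e
        rw [e]
        refine hb f' h' hf' hh' hf'c hh'c ?_ ⟨g₁⁻¹, hg₁'⟩
        rw [rowsBelow_comp_perm hg₀, rowsBelow_comp_perm hg']
      · have e := labelSum_flip (fun g => F g⁻¹) h' f''
        simp only [inv_inv] at e
        rw [e]
        by_cases hfh'' : ∃ g : Equiv.Perm (Fin n), ∀ x, f'' (g x) = h' x
        swap
        · rw [labelSum_eq_zero F hfh'']
          exact N.zero_mem
        obtain ⟨g₂, hg₂⟩ := hfh''
        have hle : rowsBelow f ≤ rowsBelow f'' := by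
          rw [rowsBelow_comp_perm hg₀, rowsBelow_comp_perm hg₂]
          exact hr.2.1.le
        refine ih (∑ x, (f'' x).2) ?_ f'' h' (fun f₃ h₃ b1 b2 c1 c2 b3 b4 =>
          hb f₃ h₃ b1 b2 (fun x => (c1 x).trans ((hf'' x).trans (hf'c x)))
            (fun x => (c2 x).trans (hr.1 x)) (hle.trans b3) b4) rfl
        rw [← hd, sum_row_comp_perm hg₀, sum_row_comp_perm hg₂]
        exact hr.2.2
    · exact ih (∑ x, (f' x).2) (hd ▸ hr.2.2) f' h' (fun f₃ h₃ b1 b2 c1 c2 b3 b4 =>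
          hb f₃ h₃ b1 b2 (fun x => (c1 x).trans (hr.1 x))
            (fun x => (c2 x).trans (hh' x)) (hr.2.1.le.trans b3) b4) rfl

/-- Relabelling `i` and `j` by a fresh label selects the permutations with `g j = i`. -/
lemma labelSum_update (F : Equiv.Perm (Fin n) → W) (f h : Fin n → Fin r × ℕ) (i j : Fin n)
    (c : Fin r × ℕ) (hf : ∀ x, f x ≠ c) (hij : f i = h j) :
    labelSum F (Function.update f i c) (Function.update h j c) =
      ∑ g ∈ Finset.univ.filter
        (fun g : Equiv.Perm (Fin n) => (∀ x, f (g x) = h x) ∧ g j = i), F g := by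
  unfold labelSum
  refine Finset.sum_congr (Finset.filter_congr fun g _ => ?_) fun _ _ => rfl
  constructor
  · intro hg
    have hgj : g j = i := by
      have := hg j
      rw [Function.update_self] at this
      by_contra hne
      rw [Function.update_of_ne hne] at this
      exact hf _ this
    refine ⟨fun x => ?_, hgj⟩
    by_cases hx : x = j
    · rw [hx, hgj, hij]
    · have := hg x
      rwa [Function.update_of_ne hx, Function.update_of_ne] at this
      exact fun e => hx (g.injective (e.trans hgj.symm))
  · rintro ⟨hg, hgj⟩ x
    by_cases hx : x = j
    · rw [hx, hgj, Function.update_self, Function.update_self]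
    · rw [Function.update_of_ne hx, Function.update_of_ne, hg]
      exact fun e => hx (g.injective (e.trans hgj.symm))

end LabelSum

namespace CellDatum

variable {R : Type*} [CommRing R] {A : Type*} [Ring A] [Algebra R A]
  {Γ : Type*} [PartialOrder Γ] {T : Γ → Type*} [∀ γ, Fintype (T γ)] (D : CellDatum R A Γ T)

lemma Abar_mono {γ μ : Γ} (h : γ ≤ μ) : D.Abar μ ≤ D.Abar γ :=
  Submodule.span_mono fun _ ⟨ν, hν, hx⟩ => ⟨ν, h.trans_lt hν, hx⟩

lemma c_mem_Abar {γ μ : Γ} (h : γ < μ) (s t : T μ) : D.c μ s t ∈ D.Abar γ :=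
  Submodule.subset_span ⟨μ, h, s, t, rfl⟩

lemma mul_mem_Abar {γ : Γ} (a : A) {x : A} (hx : x ∈ D.Abar γ) : a * x ∈ D.Abar γ := by
  unfold Abar at hx
  induction hx using Submodule.span_induction with
  | mem x hx =>
    obtain ⟨μ, hμ, u, w, rfl⟩ := hx
    obtain ⟨c, hc⟩ := D.mult μ u a
    have h1 : a * D.c μ u w - ∑ v, c v • D.c μ v w ∈ D.Abar γ := D.Abar_mono hμ.le (hc w)
    refine (Submodule.sub_mem_iff_left _ ?_).1 h1
    exact Submodule.sum_mem _ fun v _ => Submodule.smul_mem _ _ (D.c_mem_Abar hμ v w)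
  | zero => simp
  | add x y _ _ hx hy => rw [mul_add]; exact Submodule.add_mem _ hx hy
  | smul c x _ hx => rw [mul_smul_comm]; exact Submodule.smul_mem _ _ hx

lemma star_mem_Abar {γ : Γ} {x : A} (hx : x ∈ D.Abar γ) : D.star x ∈ D.Abar γ := by
  unfold Abar at hx
  induction hx using Submodule.span_induction with
  | mem x hx =>
    obtain ⟨μ, hμ, u, w, rfl⟩ := hx
    have h1 : D.star (D.c μ u w) - D.c μ w u ∈ D.Abar γ := D.Abar_mono hμ.le (D.star_c μ u w)
    exact (Submodule.sub_mem_iff_left _ (D.c_mem_Abar hμ w u)).1 h1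
  | zero => simp
  | add x y _ _ hx hy => rw [map_add]; exact Submodule.add_mem _ hx hy
  | smul c x _ hx => rw [map_smul]; exact Submodule.smul_mem _ _ hx

lemma Abar_mul_mem {γ : Γ} (a : A) {x : A} (hx : x ∈ D.Abar γ) : x * a ∈ D.Abar γ := by
  rw [← D.star_star (x * a), D.star_mul]
  exact D.star_mem_Abar (D.mul_mem_Abar _ (D.star_mem_Abar hx))

lemma star_one : D.star 1 = 1 := by
  have h := D.star_mul (D.star 1) 1
  rw [mul_one, D.star_star, mul_one] at h
  exact h.symm

variable {γ : Γ} {M : Type*} [AddCommGroup M] [Module R M] [Module A M] [IsScalarTower R A M]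
  {e : T γ → M} {p : T γ → R} {y : A} {vv : T γ → A}

/-- Left multiplication on the columns `∑ s, p s • c γ s t` is governed by the action on the
generator `∑ s, p s • e s` of the cell module. -/
lemma mul_sum_c_sub_mem (hM : IsCellModule D γ M e) (a : A) (q : T γ → R)
    (ha : a • ∑ s, p s • e s = ∑ s, q s • e s) (t : T γ) :
    a * ∑ s, p s • D.c γ s t - ∑ s, q s • D.c γ s t ∈ D.Abar γ := by
  choose c hc using fun s => D.mult γ s a
  have hq : ∀ v, q v = ∑ s, p s * c s v := by
    have h1 : ∑ v, (q v - ∑ s, p s * c s v) • e v = 0 := by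
      simp only [sub_smul, Finset.sum_sub_distrib]
      rw [← ha, Finset.smul_sum, sub_eq_zero]
      have : ∀ s, a • p s • e s = ∑ v, (p s * c s v) • e v := by
        intro s
        rw [smul_algebra_smul_comm, hM.2.2 a s (c s) (hc s), Finset.smul_sum]
        simp only [mul_smul]
      simp only [this, Finset.sum_smul]
      exact Finset.sum_comm
    exact fun v => sub_eq_zero.1 (Fintype.linearIndependent_iff.1 hM.1 _ h1 v)
  have h2 : a * ∑ s, p s • D.c γ s t - ∑ s, q s • D.c γ s t
      = ∑ s, p s • (a * D.c γ s t - ∑ v, c s v • D.c γ v t) := by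
    simp only [smul_sub, Finset.sum_sub_distrib, Finset.mul_sum, mul_smul_comm, hq,
      Finset.sum_smul, Finset.smul_sum, smul_smul]
    congr 1
    exact Finset.sum_comm
  rw [h2]
  exact Submodule.sum_mem _ fun s _ => Submodule.smul_mem _ _ (hc s t)

lemma mul_y_sub_mem (hM : IsCellModule D γ M e)
    (hy : y - ∑ s, ∑ t, (p s * p t) • D.c γ s t ∈ D.Abar γ) (a : A) (q : T γ → R)
    (ha : a • ∑ s, p s • e s = ∑ s, q s • e s) :
    a * y - ∑ s, ∑ t, (q s * p t) • D.c γ s t ∈ D.Abar γ := by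
  have h1 := D.mul_mem_Abar a hy
  have h2 : ∑ t, p t • (a * ∑ s, p s • D.c γ s t - ∑ s, q s • D.c γ s t) ∈ D.Abar γ :=
    Submodule.sum_mem _ fun t _ => Submodule.smul_mem _ _ (D.mul_sum_c_sub_mem hM a q ha t)
  convert Submodule.add_mem _ h1 h2 using 1
  have h3 : ∀ q' : T γ → R, ∑ s, ∑ t, (q' s * p t) • D.c γ s t
      = ∑ t, p t • ∑ s, q' s • D.c γ s t := by
    intro q'
    rw [Finset.sum_comm]
    simp only [Finset.smul_sum, smul_smul, mul_comm]
  simp only [h3, smul_sub, Finset.sum_sub_distrib, mul_sub, Finset.mul_sum, mul_smul_comm]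
  abel

lemma exists_mul_y_sub_mem (hM : IsCellModule D γ M e)
    (hy : y - ∑ s, ∑ t, (p s * p t) • D.c γ s t ∈ D.Abar γ)
    (hvv : ∀ t, vv t • ∑ s, p s • e s = e t) (a : A) :
    ∃ q : T γ → R, a * y - ∑ t, q t • (vv t * y) ∈ D.Abar γ := by
  have hmem : a • ∑ s, p s • e s ∈ Submodule.span R (Set.range e) := by
    rw [hM.2.1]
    trivial
  obtain ⟨q, hq⟩ := (Submodule.mem_span_range_iff_exists_fun R).1 hmem
  refine ⟨q, ?_⟩
  have h1 := D.mul_y_sub_mem hM hy a q hq.symm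
  have h2 : ∀ u, vv u * y - ∑ t, p t • D.c γ u t ∈ D.Abar γ := by
    intro u
    have := D.mul_y_sub_mem hM hy (vv u) (fun s => if s = u then 1 else 0)
      (by rw [hvv]; simp)
    simpa [ite_mul, ite_smul] using this
  have h3 : ∑ u, q u • (vv u * y - ∑ t, p t • D.c γ u t) ∈ D.Abar γ :=
    Submodule.sum_mem _ fun u _ => Submodule.smul_mem _ _ (h2 u)
  convert Submodule.sub_mem _ h1 h3 using 1
  simp only [smul_sub, Finset.sum_sub_distrib, Finset.smul_sum, smul_smul]
  abel

lemma star_y_sub_mem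
    (hy : y - ∑ s, ∑ t, (p s * p t) • D.c γ s t ∈ D.Abar γ) :
    D.star y - y ∈ D.Abar γ := by
  have h1 := D.star_mem_Abar hy
  have h2 : ∑ s, ∑ t, (p s * p t) • (D.star (D.c γ s t) - D.c γ t s) ∈ D.Abar γ :=
    Submodule.sum_mem _ fun s _ => Submodule.sum_mem _ fun t _ =>
      Submodule.smul_mem _ _ (D.star_c γ s t)
  convert Submodule.sub_mem _ (Submodule.add_mem _ h1 h2) hy using 1
  have h3 : ∑ s, ∑ t, (p s * p t) • D.c γ t s = ∑ s, ∑ t, (p s * p t) • D.c γ s t := by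
    rw [Finset.sum_comm]
    simp only [mul_comm]
  simp only [map_sub, map_sum, map_smul, smul_sub, Finset.sum_sub_distrib, h3]
  abel

lemma exists_y_mul_sub_mem (hM : IsCellModule D γ M e)
    (hy : y - ∑ s, ∑ t, (p s * p t) • D.c γ s t ∈ D.Abar γ)
    (hvv : ∀ t, vv t • ∑ s, p s • e s = e t) (b : A) :
    ∃ q : T γ → R, y * b - ∑ t, q t • (y * D.star (vv t)) ∈ D.Abar γ := by
  obtain ⟨q, hq⟩ := D.exists_mul_y_sub_mem hM hy hvv (D.star b)
  refine ⟨q, ?_⟩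
  have hs := D.star_y_sub_mem hy
  have h1 := D.star_mem_Abar hq
  have h2 := D.Abar_mul_mem b hs
  have h3 : ∑ t, q t • ((D.star y - y) * D.star (vv t)) ∈ D.Abar γ :=
    Submodule.sum_mem _ fun t _ => Submodule.smul_mem _ _ (D.Abar_mul_mem _ hs)
  convert Submodule.add_mem _ (Submodule.sub_mem _ h1 h2) h3 using 1
  simp only [map_sub, map_sum, map_smul, D.star_mul, D.star_star, sub_mul, smul_sub,
    Finset.sum_sub_distrib]
  abel

lemma c_sub_mem (hM : IsCellModule D γ M e)
    (hy : y - ∑ s, ∑ t, (p s * p t) • D.c γ s t ∈ D.Abar γ)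
    (hvv : ∀ t, vv t • ∑ s, p s • e s = e t) (s t : T γ) :
    D.c γ s t - vv s * y * D.star (vv t) ∈ D.Abar γ := by
  have hcol : ∀ u w, vv u * ∑ s, p s • D.c γ s w - D.c γ u w ∈ D.Abar γ := by
    intro u w
    have := D.mul_sum_c_sub_mem hM (vv u) (fun s => if s = u then 1 else 0)
      (by rw [hvv]; simp) w
    simpa [ite_smul] using this
  have hrow : vv s * y - ∑ t, p t • D.c γ s t ∈ D.Abar γ := by
    have := D.mul_y_sub_mem hM hy (vv s) (fun u => if u = s then 1 else 0)
      (by rw [hvv]; simp)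
    simpa [ite_mul, ite_smul] using this
  have h1 := D.Abar_mul_mem (D.star (vv t)) hrow
  have h2 := D.star_mem_Abar (hcol t s)
  have h3 : (∑ u, p u • (D.star (D.c γ u s) - D.c γ s u)) * D.star (vv t) ∈ D.Abar γ :=
    D.Abar_mul_mem _ <| Submodule.sum_mem _ fun u _ => Submodule.smul_mem _ _ (D.star_c γ u s)
  have h4 : D.star (D.c γ t s) - D.c γ s t ∈ D.Abar γ := D.star_c γ t s
  convert Submodule.sub_mem _ (Submodule.sub_mem _ (Submodule.sub_mem _ h3 h2) h4) h1 using 1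
  simp only [map_sub, map_sum, map_smul, D.star_mul, smul_sub, Finset.sum_sub_distrib, sub_mul]
  abel

/-- The ideal `Ā^γ` is generated by the lifts `y γ'` with `γ' > γ`. -/
lemma Abar_le_span_y [Finite Γ] {y : Γ → A} {vv : (γ : Γ) → T γ → A}
    (hc : ∀ γ (s t : T γ), D.c γ s t - vv γ s * y γ * D.star (vv γ t) ∈ D.Abar γ) (γ : Γ) :
    D.Abar γ ≤ Submodule.span R {x | ∃ γ', γ < γ' ∧ ∃ a b : A, x = a * y γ' * b} := by
  induction γ using (Finite.to_wellFoundedGT (α := Γ)).wf.induction with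
  | _ γ ih =>
    refine Submodule.span_le.2 ?_
    rintro x ⟨μ, hμ, s, t, rfl⟩
    have h1 := ih μ hμ (hc μ s t)
    have h2 := Submodule.span_mono (R := R)
      (s := {x | ∃ γ', μ < γ' ∧ ∃ a b : A, x = a * y γ' * b})
      (t := {x | ∃ γ', γ < γ' ∧ ∃ a b : A, x = a * y γ' * b})
      (fun _ ⟨ν, hν, hx⟩ => ⟨ν, lt_trans hμ hν, hx⟩) h1
    refine (Submodule.sub_mem_iff_left _ ?_).1 h2
    exact Submodule.subset_span ⟨μ, hμ, _, _, rfl⟩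

end CellDatum

section Tableaux

variable {r n : ℕ} {mu : Fin r → YoungDiagram}

/-- The labelling of `Fin n` by (component, row) in a tableau. -/
def rowLabel (U : MCells mu ≃ Fin n) (x : Fin n) : Fin r × ℕ :=
  ((U.symm x).1, ((U.symm x).2 : ℕ × ℕ).1)

/-- Left-hand side of the `Γ`-dominance inequality, for a labelling. -/
noncomputable def domCount {Γ : Type*} [PartialOrder Γ] (l : Fin r → Γ)
    (f : Fin n → Fin r × ℕ) (k : Fin r) (j : ℕ) : ℕ :=
  (Finset.univ.filter fun x => l k < l (f x).1).card + rowsBelow f k j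

lemma rowLabel_apply (U : MCells mu ≃ Fin n) (X : MCells mu) :
    rowLabel U (U X) = (X.1, (X.2 : ℕ × ℕ).1) := by
  unfold rowLabel
  rw [Equiv.symm_apply_apply]

lemma card_rowLabel_eq (U : MCells mu ≃ Fin n) (k : Fin r) (i : ℕ) :
    (Finset.univ.filter fun x => rowLabel U x = (k, i)).card = (mu k).rowLen i := by
  rw [← Finset.card_range ((mu k).rowLen i)]
  symm
  refine Finset.card_bij (fun j hj => U ⟨k, ⟨(i, j), (YoungDiagram.mem_cells _).2
    (YoungDiagram.mem_iff_lt_rowLen.2 (Finset.mem_range.1 hj))⟩⟩) ?_ ?_ ?_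
  · intro j hj
    exact Finset.mem_filter.2 ⟨Finset.mem_univ _, rowLabel_apply U _⟩
  · intro j hj j' hj' h
    exact congrArg (fun X : MCells mu => (X.2 : ℕ × ℕ).2) (U.injective h)
  · intro x hx
    obtain ⟨⟨k', ⟨⟨i', j⟩, hc⟩⟩, rfl⟩ := U.surjective x
    obtain ⟨rfl, rfl⟩ := Prod.mk.inj
      ((rowLabel_apply U _).symm.trans (Finset.mem_filter.1 hx).2)
    exact ⟨j, Finset.mem_range.2 (YoungDiagram.mem_iff_lt_rowLen.1
      ((YoungDiagram.mem_cells _).1 hc)), rfl⟩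

lemma card_rowLabel_fst_eq (U : MCells mu ≃ Fin n) (k : Fin r) :
    (Finset.univ.filter fun x => (rowLabel U x).1 = k).card = (mu k).card := by
  symm
  refine Finset.card_bij (fun c hc => U ⟨k, ⟨c, hc⟩⟩) ?_ ?_ ?_
  · intro c hc
    exact Finset.mem_filter.2 ⟨Finset.mem_univ _, congrArg Prod.fst (rowLabel_apply U _)⟩
  · intro c hc c' hc' h
    exact congrArg (fun X : MCells mu => (X.2 : ℕ × ℕ)) (U.injective h)
  · intro x hx
    obtain ⟨⟨k', ⟨c, hc⟩⟩, rfl⟩ := U.surjective x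
    obtain rfl : k' = k :=
      (congrArg Prod.fst (rowLabel_apply U _)).symm.trans (Finset.mem_filter.1 hx).2
    exact ⟨c, hc, rfl⟩

lemma rowsBelow_eq_sum (f : Fin n → Fin r × ℕ) (k : Fin r) (j : ℕ) :
    rowsBelow f k j =
      ∑ i ∈ Finset.range j, (Finset.univ.filter fun x => f x = (k, i)).card := by
  unfold rowsBelow
  rw [Finset.card_eq_sum_card_fiberwise (f := fun x => (f x).2) (t := Finset.range j)]
  · refine Finset.sum_congr rfl fun i hi => ?_
    congr 1
    ext x
    have := Finset.mem_range.1 hi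
    simp only [Finset.mem_filter, Finset.mem_univ, true_and, Prod.ext_iff]
    constructor
    · rintro ⟨⟨h1, h2⟩, h3⟩
      exact ⟨h1, h3⟩
    · rintro ⟨h1, h2⟩
      exact ⟨⟨h1, h2 ▸ this⟩, h2⟩
  · intro x hx
    simpa using (Finset.mem_filter.1 hx).2.2

lemma domCount_rowLabel {Γ : Type*} [PartialOrder Γ] (l : Fin r → Γ) (U : MCells mu ≃ Fin n)
    (k : Fin r) (j : ℕ) :
    domCount l (rowLabel U) k j =
      (∑ k' ∈ Finset.univ.filter (fun k' => l k < l k'), (mu k').card)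
        + ∑ i ∈ Finset.range j, (mu k).rowLen i := by
  unfold domCount
  rw [rowsBelow_eq_sum]
  congr 1
  · rw [Finset.card_eq_sum_card_fiberwise (f := fun x => (rowLabel U x).1)
      (t := Finset.univ.filter (fun k' => l k < l k'))]
    · refine Finset.sum_congr rfl fun k' hk' => ?_
      rw [← card_rowLabel_fst_eq U k', Finset.filter_filter]
      congr 1
      ext x
      have := (Finset.mem_filter.1 hk').2
      simp only [Finset.mem_filter, Finset.mem_univ, true_and]
      exact ⟨fun h => h.2, fun h => ⟨h ▸ this, h⟩⟩
    · intro x hx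
      simpa using (Finset.mem_filter.1 hx).2
  · exact Finset.sum_congr rfl fun i _ => card_rowLabel_eq U k i

lemma card_label_comp_perm {f h : Fin n → Fin r × ℕ} {g : Equiv.Perm (Fin n)}
    (hg : ∀ x, f (g x) = h x) (c : Fin r × ℕ) :
    (Finset.univ.filter fun x => f x = c).card = (Finset.univ.filter fun x => h x = c).card := by
  refine (Finset.card_bij (fun x _ => g x) ?_ ?_ ?_).symm
  · intro x hx
    simpa [hg] using hx
  · intro x _ y _ h
    exact g.injective h
  · intro y hy
    refine ⟨g⁻¹ y, ?_, perm_apply_inv g y⟩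
    simpa [← hg] using hy

lemma IsBallot.antitone {f : Fin n → Fin r × ℕ} (hf : IsBallot f) (m : ℕ) (k : Fin r) :
    Antitone fun i => (Finset.univ.filter fun x : Fin n => (x : ℕ) < m ∧ f x = (k, i)).card :=
  antitone_nat_of_succ_le fun i => hf m k i

/-- A ballot labelling comes from a family of Young diagrams. -/
lemma exists_youngDiagram_of_isBallot {f : Fin n → Fin r × ℕ} (hf : IsBallot f) :
    ∃ mu : Fin r → YoungDiagram, ∀ k i,
      (Finset.univ.filter fun x => f x = (k, i)).card = (mu k).rowLen i := by
  have hanti : ∀ k, Antitone fun i => (Finset.univ.filter fun x => f x = (k, i)).card := by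
    intro k
    convert hf.antitone n k using 6 with i x
    simp
  set B : ℕ := Finset.univ.sup fun x => (f x).2 + 1
  have hB : ∀ k i, 0 < (Finset.univ.filter fun x => f x = (k, i)).card → i < B := by
    intro k i hpos
    obtain ⟨x, hx⟩ := Finset.card_pos.1 hpos
    have h1 : (f x).2 + 1 ≤ B := Finset.le_sup (f := fun x => (f x).2 + 1) (Finset.mem_univ x)
    rw [(Finset.mem_filter.1 hx).2] at h1
    exact h1
  have hmem : ∀ k i j, (i, j) ∈ (Finset.range B ×ˢ Finset.range n).filter (fun c : ℕ × ℕ =>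
      c.2 < (Finset.univ.filter fun x => f x = (k, c.1)).card) ↔
      j < (Finset.univ.filter fun x => f x = (k, i)).card := by
    intro k i j
    simp only [Finset.mem_filter, Finset.mem_product, Finset.mem_range]
    refine ⟨fun h => h.2, fun h => ⟨⟨hB k i (by omega), lt_of_lt_of_le h ?_⟩, h⟩⟩
    exact (Finset.card_le_univ _).trans_eq (Fintype.card_fin n)
  refine ⟨fun k => ⟨(Finset.range B ×ˢ Finset.range n).filter (fun c : ℕ × ℕ =>
      c.2 < (Finset.univ.filter fun x => f x = (k, c.1)).card), ?_⟩, ?_⟩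
  · rintro ⟨i, j⟩ ⟨i', j'⟩ hle hm
    rw [Finset.mem_coe, hmem] at hm ⊢
    have h1 : i' ≤ i := hle.1
    have h2 : j' ≤ j := hle.2
    have h3 := hanti k h1
    simp only at h3
    omega
  · intro k i
    refine eq_of_forall_lt_iff fun j => ?_
    rw [← YoungDiagram.mem_iff_lt_rowLen, ← YoungDiagram.mem_cells, hmem]

/-- A ballot labelling is the row labelling of a standard tableau. -/
lemma exists_isStdTableau_of_isBallot {f : Fin n → Fin r × ℕ} (hf : IsBallot f)
    (hmu : ∀ k i, (Finset.univ.filter fun x => f x = (k, i)).card = (mu k).rowLen i) :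
    ∃ U : MCells mu ≃ Fin n, IsStdTableau U ∧ rowLabel U = f := by
  set pos : Fin n → ℕ := fun x => (Finset.univ.filter fun z => z < x ∧ f z = f x).card with hpos
  have hlt : ∀ x y, f x = f y → x < y → pos x < pos y := by
    intro x y hxy h
    refine Finset.card_lt_card (Finset.ssubset_iff_of_subset ?_ |>.2 ⟨x, ?_, ?_⟩)
    · intro z hz
      simp only [Finset.mem_filter, Finset.mem_univ, true_and] at hz ⊢
      exact ⟨hz.1.trans h, hz.2.trans hxy⟩
    · simp [h, hxy]
    · simp
  have hcell : ∀ x, ((f x).2, pos x) ∈ (mu (f x).1).cells := by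
    intro x
    rw [YoungDiagram.mem_cells, YoungDiagram.mem_iff_lt_rowLen, ← hmu]
    refine Finset.card_lt_card (Finset.ssubset_iff_of_subset ?_ |>.2 ⟨x, ?_, ?_⟩)
    · intro z hz
      simp only [Finset.mem_filter, Finset.mem_univ, true_and] at hz ⊢
      exact hz.2
    · simp
    · simp
  let V : Fin n → MCells mu := fun x => ⟨(f x).1, ⟨((f x).2, pos x), hcell x⟩⟩
  have hVinj : Function.Injective V := by
    intro x y hxy
    have h1 : (f x).1 = (f y).1 := congrArg (fun c : MCells mu => c.1) hxy
    have h2 : (f x).2 = (f y).2 := congrArg (fun c : MCells mu => (c.2 : ℕ × ℕ).1) hxy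
    have h3 : pos x = pos y := congrArg (fun c : MCells mu => (c.2 : ℕ × ℕ).2) hxy
    have h4 : f x = f y := Prod.ext h1 h2
    rcases lt_trichotomy x y with h | h | h
    · exact absurd h3 (hlt x y h4 h).ne
    · exact h
    · exact absurd h3 (hlt y x h4.symm h).ne'
  have hVsurj : Function.Surjective V := by
    rintro ⟨k, ⟨⟨i, j⟩, hc⟩⟩
    obtain ⟨x, hfx, hposx⟩ : ∃ x, f x = (k, i) ∧ pos x = j := by
      set s := Finset.univ.filter fun x => f x = (k, i) with hs
      have hj : j < s.card := by
        rw [hs, hmu]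
        exact YoungDiagram.mem_iff_lt_rowLen.1 ((YoungDiagram.mem_cells _).1 hc)
      set x := s.orderEmbOfFin rfl ⟨j, hj⟩ with hx
      have hfx : f x = (k, i) := (Finset.mem_filter.1 (Finset.orderEmbOfFin_mem s rfl ⟨j, hj⟩)).2
      refine ⟨x, hfx, ?_⟩
      have : (Finset.univ.filter fun z => z < x ∧ f z = f x)
          = (Finset.Iio (⟨j, hj⟩ : Fin s.card)).map (s.orderEmbOfFin rfl).toEmbedding := by
        ext z
        simp only [Finset.mem_filter, Finset.mem_univ, true_and, Finset.mem_map, Finset.mem_Iio,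
          RelEmbedding.coe_toEmbedding]
        constructor
        · rintro ⟨h1, h2⟩
          have hz : z ∈ s := by simp [hs, h2, hfx]
          rw [← Finset.mem_coe, ← Finset.range_orderEmbOfFin s rfl] at hz
          obtain ⟨w, rfl⟩ := hz
          exact ⟨w, (s.orderEmbOfFin rfl).lt_iff_lt.1 h1, rfl⟩
        · rintro ⟨w, hw, rfl⟩
          refine ⟨(s.orderEmbOfFin rfl).lt_iff_lt.2 hw, ?_⟩
          rw [hfx]
          exact (Finset.mem_filter.1 (Finset.orderEmbOfFin_mem s rfl w)).2
      rw [hpos]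
      simp only
      rw [this, Finset.card_map, Fin.card_Iio]
    refine ⟨x, ?_⟩
    have h1 : k = (f x).1 := by rw [hfx]
    subst h1
    have h2 : i = (f x).2 := by rw [hfx]
    subst h2
    have h3 : j = pos x := hposx.symm
    subst h3
    rfl
  let E : MCells mu ≃ Fin n := (Equiv.ofBijective V ⟨hVinj, hVsurj⟩).symm
  refine ⟨E, ?_, rfl⟩
  intro X Y hk hi hj hne
  obtain ⟨x, rfl⟩ := hVsurj X
  obtain ⟨y, rfl⟩ := hVsurj Y
  have hE : ∀ z, E (V z) = z := fun z => (Equiv.ofBijective V ⟨hVinj, hVsurj⟩).symm_apply_apply z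
  rw [hE, hE]
  change (f x).1 = (f y).1 at hk
  change (f x).2 ≤ (f y).2 at hi
  change pos x ≤ pos y at hj
  by_contra hnlt
  have hyx : y < x := lt_of_le_of_ne (not_lt.1 hnlt) fun h => hne (h ▸ rfl)
  have h1 := hf.antitone (y + 1) (f y).1 hi
  simp only at h1
  have h2 : pos y < (Finset.univ.filter fun z : Fin n =>
      (z : ℕ) < y + 1 ∧ f z = ((f y).1, (f y).2)).card := by
    refine Finset.card_lt_card (Finset.ssubset_iff_of_subset ?_ |>.2 ⟨y, ?_, ?_⟩)
    · intro z hz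
      simp only [Finset.mem_filter, Finset.mem_univ, true_and] at hz ⊢
      exact ⟨Nat.lt_succ_of_lt hz.1, hz.2⟩
    · simp
    · simp
  have h3 : (Finset.univ.filter fun z : Fin n =>
      (z : ℕ) < y + 1 ∧ f z = ((f y).1, (f x).2)).card ≤ pos x := by
    refine Finset.card_le_card ?_
    intro z hz
    simp only [Finset.mem_filter, Finset.mem_univ, true_and] at hz ⊢
    refine ⟨lt_of_le_of_lt (Nat.lt_succ_iff.1 hz.1 : z ≤ y) hyx, ?_⟩
    rw [hz.2, ← hk]
  omega

lemma sum_card_eq (U : MCells mu ≃ Fin n) : ∑ k, (mu k).card = n := by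
  rw [← Finset.sum_congr rfl fun k _ => card_rowLabel_fst_eq U k,
    ← Finset.card_eq_sum_card_fiberwise (fun _ _ => Finset.mem_coe.2 (Finset.mem_univ _)),
    Finset.card_univ, Fintype.card_fin]

lemma exists_isSuperstandard (U : MCells mu ≃ Fin n) :
    ∃ tm : MCells mu ≃ Fin n, IsSuperstandard tm := by
  let key : MCells mu → Fin r ×ₗ ℕ ×ₗ ℕ := fun x =>
    toLex (x.1, toLex ((x.2 : ℕ × ℕ).1, (x.2 : ℕ × ℕ).2))
  have hkey : Function.Injective key := by
    rintro ⟨k, ⟨⟨i, j⟩, hc⟩⟩ ⟨k', ⟨⟨i', j'⟩, hc'⟩⟩ h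
    have h := toLex.injective h
    obtain ⟨h1, h2⟩ := Prod.mk.inj h
    obtain ⟨h3, h4⟩ := Prod.mk.inj (toLex.injective h2)
    simp only at h1 h3 h4
    subst h1 h3 h4
    rfl
  let _ : LinearOrder (MCells mu) := LinearOrder.lift' key hkey
  have hcard : Fintype.card (MCells mu) = n := by
    rw [Fintype.card_congr U, Fintype.card_fin]
  refine ⟨(Fintype.orderIsoFinOfCardEq (MCells mu) hcard).symm.toEquiv, fun x y => ?_⟩
  have h1 : (Fintype.orderIsoFinOfCardEq (MCells mu) hcard).symm x ≤
      (Fintype.orderIsoFinOfCardEq (MCells mu) hcard).symm y ↔ x ≤ y :=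
    OrderIso.le_iff_le _
  refine h1.trans ?_
  change key x ≤ key y ↔ _
  simp only [key, Prod.Lex.toLex_le_toLex]

end Tableaux

section WreathSums

variable {R : Type*} [CommRing R] {A : Type*} [Ring A] [Algebra R A]
  {n r : ℕ} {W : Type*} [Ring W] [Algebra R W]
  (φ : ((⨂[R] _ : Fin n, A) ⊗[R] (Equiv.Perm (Fin n) →₀ R)) ≃ₗ[R] W)

/-- `wm` as a multilinear map in the tensor factors. -/
noncomputable def wmMulti (π : Equiv.Perm (Fin n)) :
    MultilinearMap R (fun _ : Fin n => A) W :=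
  (φ.toLinearMap ∘ₗ (TensorProduct.mk R (⨂[R] _ : Fin n, A) (Equiv.Perm (Fin n) →₀ R)).flip
    (Finsupp.single π 1)).compMultilinearMap (PiTensorProduct.tprod R)

lemma wmMulti_apply (π : Equiv.Perm (Fin n)) (a : Fin n → A) : wmMulti φ π a = wm φ a π := rfl

/-- The sum of the elements `c g d` of the wreath product, over the permutations `g` carrying the
labelling `h` to the labelling `f`. -/
noncomputable def tensorSum (c d : Fin n → A) (f h : Fin n → Fin r × ℕ) : W :=
  labelSum (fun g => wm φ (fun x => c x * d (g⁻¹ x)) g) f h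

lemma exists_linear_tensorSum_left (c d : Fin n → A) (f h : Fin n → Fin r × ℕ) (i : Fin n) :
    ∃ L : A →ₗ[R] W, ∀ z, L z = tensorSum φ (Function.update c i z) d f h := by
  refine ⟨∑ g ∈ Finset.univ.filter (fun g : Equiv.Perm (Fin n) => ∀ x, f (g x) = h x),
    (wmMulti φ g).toLinearMap (fun x => c x * d (g⁻¹ x)) i ∘ₗ
      LinearMap.mulRight R (d (g⁻¹ i)), fun z => ?_⟩
  rw [LinearMap.sum_apply]
  unfold tensorSum labelSum
  refine Finset.sum_congr rfl fun g _ => ?_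
  rw [LinearMap.comp_apply, MultilinearMap.toLinearMap_apply, LinearMap.mulRight_apply,
    wmMulti_apply]
  congr 1
  funext x
  by_cases hx : x = i
  · subst hx
    simp
  · simp [Function.update_of_ne hx]

lemma exists_linear_tensorSum_right (c d : Fin n → A) (f h : Fin n → Fin r × ℕ) (j : Fin n) :
    ∃ L : A →ₗ[R] W, ∀ z, L z = tensorSum φ c (Function.update d j z) f h := by
  refine ⟨∑ g ∈ Finset.univ.filter (fun g : Equiv.Perm (Fin n) => ∀ x, f (g x) = h x),
    (wmMulti φ g).toLinearMap (fun x => c x * d (g⁻¹ x)) (g j) ∘ₗ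
      LinearMap.mulLeft R (c (g j)), fun z => ?_⟩
  rw [LinearMap.sum_apply]
  unfold tensorSum labelSum
  refine Finset.sum_congr rfl fun g _ => ?_
  rw [LinearMap.comp_apply, MultilinearMap.toLinearMap_apply, LinearMap.mulLeft_apply,
    wmMulti_apply]
  congr 1
  funext x
  by_cases hx : x = g j
  · subst hx
    simp
  · have hx' : g⁻¹ x ≠ j := fun h => hx (by rw [← h, perm_apply_inv])
    rw [Function.update_of_ne hx, Function.update_of_ne hx']

/-- A property that is linear in each tensor factor may be checked on spanning sets, one factor at
a time. -/
lemma forall_of_span {Q : (Fin n → A) → Prop}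
    (hQ : ∀ c i, ∃ K : Submodule R A, ∀ z, z ∈ K ↔ Q (Function.update c i z))
    (Al G B : Fin n → Set A) (hG : ∀ i, G i ⊆ Al i)
    (hspan : ∀ i, ∀ z ∈ Al i, z ∈ Submodule.span R (G i ∪ B i))
    (hgood : ∀ c, (∀ i, c i ∈ G i) → Q c)
    (hbad : ∀ c i, (∀ x, x ≠ i → c x ∈ Al x) → c i ∈ B i → Q c)
    (c : Fin n → A) (hc : ∀ i, c i ∈ Al i) : Q c := by
  suffices H : ∀ s : Finset (Fin n), ∀ c, (∀ i, c i ∈ Al i) → (∀ i ∉ s, c i ∈ G i) → Q c from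
    H Finset.univ c hc fun i hi => absurd (Finset.mem_univ i) hi
  intro s
  induction s using Finset.induction_on with
  | empty => exact fun c _ hcG => hgood c fun i => hcG i (Finset.notMem_empty i)
  | insert i s his ih =>
    intro c hcA hcG
    obtain ⟨K, hK⟩ := hQ c i
    have h1 : Submodule.span R (G i ∪ B i) ≤ K := by
      refine Submodule.span_le.2 ?_
      rintro z (hz | hz)
      · refine (hK z).2 (ih _ ?_ ?_)
        · intro x
          by_cases hx : x = i
          · subst hx
            simpa using hG x hz
          · simpa [hx] using hcA x
        · intro x hxs
          by_cases hx : x = i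
          · subst hx
            simpa using hz
          · simpa [hx] using hcG x (by simp [hx, hxs])
      · refine (hK z).2 (hbad _ i ?_ (by simpa using hz))
        intro x hx
        simpa [hx] using hcA x
    have h2 := (hK (c i)).1 (h1 (hspan i _ (hcA i)))
    rwa [Function.update_eq_self] at h2

lemma labelSum_mem_of_split_left (N : Submodule R W) (F : Equiv.Perm (Fin n) → W)
    (f h : Fin n → Fin r × ℕ) (i : Fin n) (c : Fin r × ℕ) (hc : ∀ x, f x ≠ c)
    (H : ∀ j, f i = h j → ∃ F' : Equiv.Perm (Fin n) → W,
      (∀ g, (∀ x, f (g x) = h x) → g j = i → F g = F' g) ∧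
        labelSum F' (Function.update f i c) (Function.update h j c) ∈ N) :
    labelSum F f h ∈ N := by
  refine sum_mem_of_fibers N F _ (fun g => ((fun x => f (g x)), g⁻¹ i)) ?_ ?_
  · intro g g' hq hg x
    exact (congrFun (Prod.mk.inj hq).1 x).symm.trans (hg x)
  · intro g hg
    obtain ⟨F', hF, hN⟩ := H (g⁻¹ i) (by rw [← hg, perm_apply_inv])
    rw [labelSum_update F' f h i _ c hc (by rw [← hg, perm_apply_inv])] at hN
    convert hN using 1
    refine Finset.sum_congr (Finset.filter_congr fun g' _ => ?_) fun g' hg' => ?_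
    · rw [Prod.mk.injEq]
      refine and_congr ⟨fun h x => (congrFun h x).trans (hg x),
        fun h => funext fun x => (h x).trans (hg x).symm⟩ ⟨fun h => ?_, fun h => ?_⟩
      · rw [← h, perm_apply_inv]
      · rw [← h, perm_inv_apply, h]
    · have h1 := (Finset.mem_filter.1 hg').2
      exact hF g' h1.1 h1.2

lemma labelSum_mem_of_split_right (N : Submodule R W) (F : Equiv.Perm (Fin n) → W)
    (f h : Fin n → Fin r × ℕ) (j : Fin n) (c : Fin r × ℕ) (hc : ∀ x, f x ≠ c)
    (H : ∀ i, f i = h j → ∃ F' : Equiv.Perm (Fin n) → W,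
      (∀ g, (∀ x, f (g x) = h x) → g j = i → F g = F' g) ∧
        labelSum F' (Function.update f i c) (Function.update h j c) ∈ N) :
    labelSum F f h ∈ N := by
  refine sum_mem_of_fibers N F _ (fun g => ((fun x => f (g x)), g j)) ?_ ?_
  · intro g g' hq hg x
    exact (congrFun (Prod.mk.inj hq).1 x).symm.trans (hg x)
  · intro g hg
    obtain ⟨F', hF, hN⟩ := H (g j) (hg j)
    rw [labelSum_update F' f h _ j c hc (hg j)] at hN
    convert hN using 1
    refine Finset.sum_congr (Finset.filter_congr fun g' _ => ?_) fun g' hg' => ?_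
    · rw [Prod.mk.injEq]
      exact and_congr ⟨fun h x => (congrFun h x).trans (hg x),
        fun h => funext fun x => (h x).trans (hg x).symm⟩ Iff.rfl
    · have h1 := (Finset.mem_filter.1 hg').2
      exact hF g' h1.1 h1.2

lemma tensorSum_shift {Γ : Type*} (y : Γ → A) (l : Fin r → Γ) (a b : Fin n → A)
    (f h : Fin n → Fin r × ℕ) :
    tensorSum φ (fun x => a x * y (l (f x).1)) b f h =
      tensorSum φ a (fun x => y (l (h x).1) * b x) f h := by
  unfold tensorSum labelSum
  refine Finset.sum_congr rfl fun g hg => ?_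
  have hg := (Finset.mem_filter.1 hg).2
  refine congrArg (fun c => wm φ c g) (funext fun x => ?_)
  beta_reduce
  rw [← hg (g⁻¹ x), perm_apply_inv, mul_assoc]

section Expression

variable {Γ : Type*} {T : Γ → Type*} {mu : Fin r → YoungDiagram}

lemma dperm_inv_apply (tm U : MCells mu ≃ Fin n) (x : Fin n) :
    (dperm tm U)⁻¹ x = tm (U.symm x) := rfl

lemma sElt_mul_eq_tensorSum
    (hmul : ∀ (a b : Fin n → A) (π σ : Equiv.Perm (Fin n)),
      wm φ a π * wm φ b σ = wm φ (fun i => a i * b (π⁻¹ i)) (π * σ))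
    (y : Γ → A) (vv : (γ : Γ) → T γ → A) (l : Fin r → Γ) (tm U U' : MCells mu ≃ Fin n)
    (τ : ∀ x : MCells mu, T (l x.1)) (b : Fin n → A) :
    sElt φ (dperm tm U) * vElt φ vv l tm τ * yaElt φ y l tm * xlamElt φ tm * wm φ b 1 *
        sElt φ (dperm tm U')⁻¹ =
      tensorSum φ (fun i => vv (l (U.symm i).1) (τ (U.symm i)) * y (l (U.symm i).1))
        (fun j => b (tm (U'.symm j))) (rowLabel U) (rowLabel U') := by
  have htm : ∀ i, tm.symm ((dperm tm U)⁻¹ i) = U.symm i := fun i => by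
    rw [dperm_inv_apply, Equiv.symm_apply_apply]
  unfold sElt vElt yaElt xlamElt tensorSum labelSum sElt
  simp only [hmul, Finset.mul_sum, Finset.sum_mul, mul_one, one_mul]
  refine Finset.sum_nbij' (fun σ => dperm tm U * σ * (dperm tm U')⁻¹)
    (fun g => (dperm tm U)⁻¹ * g * dperm tm U') ?_ ?_ ?_ ?_ ?_
  · intro σ hσ
    have hσ := (Finset.mem_filter.1 hσ).2
    refine Finset.mem_filter.2 ⟨Finset.mem_univ _, fun x => ?_⟩
    have h1 := hσ (U'.symm x)
    have h2 : U.symm ((dperm tm U * σ * (dperm tm U')⁻¹) x) = tm.symm (σ (tm (U'.symm x))) := by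
      rw [← htm]
      simp only [Equiv.Perm.mul_apply, perm_inv_apply, dperm_inv_apply]
    unfold rowLabel
    rw [h2]
    exact Prod.ext h1.1 h1.2
  · intro g hg
    have hg := (Finset.mem_filter.1 hg).2
    refine Finset.mem_filter.2 ⟨Finset.mem_univ _, fun X => ?_⟩
    have h1 := hg (U' X)
    rw [rowLabel_apply] at h1
    have h2 : tm.symm (((dperm tm U)⁻¹ * g * dperm tm U') (tm X)) = U.symm (g (U' X)) := by
      rw [← htm]
      simp [dperm]
    rw [h2]
    exact ⟨congrArg Prod.fst h1, congrArg Prod.snd h1⟩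
  · intro σ _
    group
  · intro g _
    group
  · intro σ _
    congr 1
    funext i
    have h3 : tm (U'.symm ((dperm tm U * σ * (dperm tm U')⁻¹)⁻¹ i)) =
        (dperm tm U * σ)⁻¹ i := by
      rw [← dperm_inv_apply]
      simp
    rw [h3]
    have htm' : ∀ i, U.symm i = tm.symm ((dperm tm U)⁻¹ i) := fun i => (htm i).symm
    rw [htm']

lemma sElt_mul_eq_tensorSum_one
    (hone : wm φ (fun _ => (1 : A)) 1 = 1)
    (hmul : ∀ (a b : Fin n → A) (π σ : Equiv.Perm (Fin n)),
      wm φ a π * wm φ b σ = wm φ (fun i => a i * b (π⁻¹ i)) (π * σ))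
    (y : Γ → A) (vv : (γ : Γ) → T γ → A) (l : Fin r → Γ) (tm U : MCells mu ≃ Fin n)
    (τ : ∀ x : MCells mu, T (l x.1)) :
    sElt φ (dperm tm U) * vElt φ vv l tm τ * yaElt φ y l tm * xlamElt φ tm =
      tensorSum φ (fun i => vv (l (U.symm i).1) (τ (U.symm i)) * y (l (U.symm i).1))
        (fun _ => 1) (rowLabel U) (rowLabel tm) := by
  rw [← sElt_mul_eq_tensorSum φ hmul y vv l tm U tm τ (fun _ => 1)]
  have h1 : dperm tm tm = 1 := tm.symm_trans_self
  rw [h1, inv_one]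
  unfold sElt
  rw [hone, mul_one, mul_one]

lemma mwElt_eq_tensorSum [PartialOrder Γ] [∀ γ, Fintype (T γ)] (D : CellDatum R A Γ T)
    (hmul : ∀ (a b : Fin n → A) (π σ : Equiv.Perm (Fin n)),
      wm φ a π * wm φ b σ = wm φ (fun i => a i * b (π⁻¹ i)) (π * σ))
    (starW : W →ₗ[R] W)
    (hsw : ∀ (a : Fin n → A) (π : Equiv.Perm (Fin n)),
      starW (wm φ a π) = wm φ (fun i => D.star (a (π i))) π⁻¹)
    (y : Γ → A) (vv : (γ : Γ) → T γ → A) (l : Fin r → Γ) (tm U U' : MCells mu ≃ Fin n)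
    (τ τ' : ∀ x : MCells mu, T (l x.1)) :
    mwElt φ starW y vv l tm U U' τ τ' =
      tensorSum φ (fun i => vv (l (U.symm i).1) (τ (U.symm i)) * y (l (U.symm i).1))
        (fun j => D.star (vv (l (U'.symm j).1) (τ' (U'.symm j)))) (rowLabel U) (rowLabel U') := by
  have h0 : (fun j => D.star (vv (l (U'.symm j).1) (τ' (U'.symm j)))) = fun j =>
      (fun i => D.star (vv (l (tm.symm i).1) (τ' (tm.symm i)))) (tm (U'.symm j)) := by
    funext j
    beta_reduce
    rw [Equiv.symm_apply_apply]
  rw [h0]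
  refine Eq.trans ?_ (sElt_mul_eq_tensorSum φ hmul y vv l tm U U' τ
    (fun i => D.star (vv (l (tm.symm i).1) (τ' (tm.symm i)))))
  have h1 : starW (vElt φ vv l tm τ') =
      wm φ (fun i => D.star (vv (l (tm.symm i).1) (τ' (tm.symm i)))) 1 := by
    unfold vElt
    rw [hsw, inv_one]
    rfl
  have h2 : starW (sElt φ (dperm tm U')) = sElt φ (dperm tm U')⁻¹ := by
    unfold sElt
    rw [hsw, D.star_one]
  unfold mwElt
  rw [h1, h2]

end Expression

end WreathSums

section Straightening

variable {R : Type*} [CommRing R] {A : Type*} [Ring A] [Algebra R A]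
  {n r : ℕ} {W : Type*} [Ring W] [Algebra R W]
  (φ : ((⨂[R] _ : Fin n, A) ⊗[R] (Equiv.Perm (Fin n) →₀ R)) ≃ₗ[R] W)

lemma domCount_eq_card {Γ : Type*} [PartialOrder Γ] (l : Fin r → Γ) (f : Fin n → Fin r × ℕ)
    (k : Fin r) (j : ℕ) :
    domCount l f k j = (Finset.univ.filter fun x =>
      l k < l (f x).1 ∨ ((f x).1 = k ∧ (f x).2 < j)).card := by
  unfold domCount rowsBelow
  rw [Finset.filter_or, Finset.card_union_of_disjoint]
  refine Finset.disjoint_left.2 fun x h1 h2 => ?_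
  have h1 := (Finset.mem_filter.1 h1).2
  rw [(Finset.mem_filter.1 h2).2.1] at h1
  exact lt_irrefl _ h1

lemma domCount_le_update {Γ : Type*} [PartialOrder Γ] (l : Fin r → Γ)
    (f : Fin n → Fin r × ℕ) (i : Fin n) (c : Fin r × ℕ) (hc : l (f i).1 < l c.1) :
    domCount l f ≤ domCount l (Function.update f i c) := by
  intro k j
  rw [domCount_eq_card, domCount_eq_card]
  refine Finset.card_le_card fun x hx => ?_
  have hx := (Finset.mem_filter.1 hx).2
  refine Finset.mem_filter.2 ⟨Finset.mem_univ _, ?_⟩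
  by_cases hxi : x = i
  · subst hxi
    rw [Function.update_self]
    rcases hx with hx | hx
    · exact Or.inl (hx.trans hc)
    · exact Or.inl (hx.1 ▸ hc)
  · rwa [Function.update_of_ne hxi]

lemma domCount_le_of_rowsBelow_le {Γ : Type*} [PartialOrder Γ] (l : Fin r → Γ)
    {f f' : Fin n → Fin r × ℕ} (hf : ∀ x, (f' x).1 = (f x).1) (h : rowsBelow f ≤ rowsBelow f') :
    domCount l f ≤ domCount l f' := by
  intro k j
  unfold domCount
  simp only [hf]
  exact Nat.add_le_add_left (h k j) _

lemma exists_fresh_row (f : Fin n → Fin r × ℕ) (k : Fin r) : ∃ m, ∀ x, f x ≠ (k, m) := by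
  refine ⟨(Finset.univ.sup fun x => (f x).2) + 1, fun x hx => ?_⟩
  have h1 : (f x).2 ≤ Finset.univ.sup fun x => (f x).2 :=
    Finset.le_sup (f := fun x => (f x).2) (Finset.mem_univ x)
  rw [hx] at h1
  exact absurd h1 (Nat.not_succ_le_self _)

/-- If the `i`-th left factor lies in the ideal generated by `y (l k)`, then the point `i` may be
moved to a fresh row of component `k`. -/
lemma tensorSum_mem_of_left_factor {Γ : Type*} (N : Submodule R W) (y : Γ → A) (l : Fin r → Γ)
    (a c d : Fin n → A) (f h : Fin n → Fin r × ℕ) (i : Fin n) (k : Fin r) (m : ℕ)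
    (hm : ∀ x, f x ≠ (k, m)) (a' b' : A) (hci : c i = a' * y (l k) * b')
    (hcx : ∀ x, x ≠ i → c x = a x * y (l (f x).1))
    (H : ∀ j, tensorSum φ
      (fun x => Function.update a i a' x * y (l (Function.update f i (k, m) x).1))
      (Function.update d j (b' * d j)) (Function.update f i (k, m))
      (Function.update h j (k, m)) ∈ N) :
    tensorSum φ c d f h ∈ N := by
  refine labelSum_mem_of_split_left N _ f h i (k, m) hm fun j _ => ⟨_, fun g _ hgj => ?_, H j⟩
  refine congrArg (fun c => wm φ c g) (funext fun x => ?_)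
  beta_reduce
  by_cases hx : x = i
  · subst hx
    have hj : g⁻¹ x = j := by rw [← hgj, perm_inv_apply]
    rw [hj, Function.update_self, Function.update_self, Function.update_self, hci]
    simp only [mul_assoc]
  · have hj : g⁻¹ x ≠ j := fun h => hx (by rw [← hgj, ← h, perm_apply_inv])
    rw [Function.update_of_ne hx, Function.update_of_ne hx, Function.update_of_ne hj, hcx x hx]

/-- If the `j`-th right factor lies in the ideal generated by `y (l k)`, then the point `j` may be
moved to a fresh row of component `k`. -/
lemma tensorSum_mem_of_right_factor {Γ : Type*} (N : Submodule R W) (y : Γ → A) (l : Fin r → Γ)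
    (a d b : Fin n → A) (f h : Fin n → Fin r × ℕ) (j : Fin n) (k : Fin r) (m : ℕ)
    (hm : ∀ x, f x ≠ (k, m)) (a' b' : A) (hdj : d j = a' * y (l k) * b')
    (hdx : ∀ x, x ≠ j → d x = y (l (h x).1) * b x)
    (H : ∀ i, f i = h j → tensorSum φ
      (fun x => Function.update a i (a i * a') x * y (l (Function.update f i (k, m) x).1))
      (Function.update b j b') (Function.update f i (k, m))
      (Function.update h j (k, m)) ∈ N) :
    tensorSum φ a d f h ∈ N := by
  refine labelSum_mem_of_split_right N _ f h j (k, m) hm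
    fun i hij => ⟨_, fun g hg hgj => ?_, H i hij⟩
  refine congrArg (fun c => wm φ c g) (funext fun x => ?_)
  beta_reduce
  by_cases hx : x = i
  · subst hx
    have hj : g⁻¹ x = j := by rw [← hgj, perm_inv_apply]
    rw [hj, Function.update_self, Function.update_self, Function.update_self, hdj]
    simp only [mul_assoc]
  · have hj : g⁻¹ x ≠ j := fun h => hx (by rw [← hgj, ← h, perm_apply_inv])
    rw [Function.update_of_ne hx, Function.update_of_ne hx, Function.update_of_ne hj, hdx _ hj,
      ← hg, perm_apply_inv, mul_assoc]

/-- The sums over labellings that strictly dominate `d₀` are combinations of those attached to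
ballot labellings and to tensor factors of the form `vv t * y` and `star (vv t)`. -/
lemma tensorSum_mem_of_lt_domCount {Γ : Type*} [PartialOrder Γ] {T : Γ → Type*}
    (N : Submodule R W) (star : A → A) (y : Γ → A) (vv : (γ : Γ) → T γ → A) (l : Fin r → Γ)
    (hl : Function.Surjective l) (hcomp : ∀ i j : Fin r, l j ≤ l i → i ≤ j)
    (hleft : ∀ γ a, a * y γ ∈ Submodule.span R ({z | ∃ t, z = vv γ t * y γ} ∪
      {z | ∃ γ', γ < γ' ∧ ∃ a b : A, z = a * y γ' * b}))
    (hright : ∀ γ b, y γ * b ∈ Submodule.span R ({z | ∃ t, z = y γ * star (vv γ t)} ∪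
      {z | ∃ γ', γ < γ' ∧ ∃ a b : A, z = a * y γ' * b}))
    (d₀ : Fin r → ℕ → ℕ)
    (hN : ∀ (c d : Fin n → A) (f h : Fin n → Fin r × ℕ), IsBallot f → IsBallot h →
      (∃ g : Equiv.Perm (Fin n), ∀ x, f (g x) = h x) → d₀ < domCount l f →
      (∀ i, ∃ t : T (l (f i).1), c i = vv _ t * y (l (f i).1)) →
      (∀ j, ∃ t : T (l (h j).1), d j = star (vv _ t)) → tensorSum φ c d f h ∈ N)
    (a b : Fin n → A) (f h : Fin n → Fin r × ℕ) (hd : d₀ < domCount l f) :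
    tensorSum φ (fun x => a x * y (l (f x).1)) b f h ∈ N := by
  induction hs : ∑ x, ((f x).1 : ℕ) using Nat.strong_induction_on generalizing a b f h with
  | _ s ih =>
  refine labelSum_mem_of_ballot N _ f h ?_
  intro f' h' hbf hbh hcf hch hrb hg
  simp only [← hcf] at hs ⊢
  have hd' : d₀ < domCount l f' := hd.trans_le (domCount_le_of_rowsBelow_le l hcf hrb)
  change tensorSum φ (fun x => a x * y (l (f' x).1)) b f' h' ∈ N
  clear hcf hch hrb hd
  have IH : ∀ (i : Fin n) (k : Fin r) (m : ℕ) (a b : Fin n → A) (h'' : Fin n → Fin r × ℕ),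
      l (f' i).1 < l k → tensorSum φ (fun x => a x * y (l (Function.update f' i (k, m) x).1)) b
        (Function.update f' i (k, m)) h'' ∈ N := by
    intro i k m a b h'' hk
    refine ih _ ?_ a b _ h'' (hd'.trans_le (domCount_le_update l f' i (k, m) hk)) rfl
    rw [← hs]
    have hki : k < (f' i).1 :=
      lt_of_le_of_ne (hcomp _ _ hk.le) fun h => by rw [h] at hk; exact lt_irrefl _ hk
    refine Finset.sum_lt_sum (fun x _ => ?_) ⟨i, Finset.mem_univ _, ?_⟩
    · by_cases hx : x = i
      · subst hx
        rw [Function.update_self]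
        exact hki.le
      · rw [Function.update_of_ne hx]
    · rw [Function.update_self]
      exact hki
  obtain ⟨g, hg⟩ := hg
  refine forall_of_span (R := R) (Q := fun c => tensorSum φ c b f' h' ∈ N) ?_
    (fun i => {z | ∃ a, z = a * y (l (f' i).1)})
    (fun i => {z | ∃ t, z = vv (l (f' i).1) t * y (l (f' i).1)})
    (fun i => {z | ∃ γ', l (f' i).1 < γ' ∧ ∃ a b : A, z = a * y γ' * b}) ?_ ?_ ?_ ?_ _ ?_
  · intro c i
    obtain ⟨L, hL⟩ := exists_linear_tensorSum_left φ c b f' h' i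
    exact ⟨N.comap L, fun z => by rw [Submodule.mem_comap, hL]⟩
  · rintro i _ ⟨t, rfl⟩
    exact ⟨_, rfl⟩
  · rintro i _ ⟨a, rfl⟩
    exact hleft _ a
  · intro c hc
    choose t ht using hc
    obtain rfl : c = fun x => vv _ (t x) * y (l (f' x).1) := funext ht
    rw [tensorSum_shift φ y l (fun x => vv _ (t x))]
    refine forall_of_span (R := R)
      (Q := fun d => tensorSum φ (fun x => vv _ (t x)) d f' h' ∈ N) ?_
      (fun j => {z | ∃ b, z = y (l (h' j).1) * b})
      (fun j => {z | ∃ t, z = y (l (h' j).1) * star (vv (l (h' j).1) t)})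
      (fun j => {z | ∃ γ', l (h' j).1 < γ' ∧ ∃ a b : A, z = a * y γ' * b}) ?_ ?_ ?_ ?_ _ ?_
    · intro c i
      obtain ⟨L, hL⟩ := exists_linear_tensorSum_right φ (fun x => vv _ (t x)) c f' h' i
      exact ⟨N.comap L, fun z => by rw [Submodule.mem_comap, hL]⟩
    · rintro i _ ⟨t, rfl⟩
      exact ⟨_, rfl⟩
    · rintro i _ ⟨a, rfl⟩
      exact hright _ a
    · intro d hdt
      choose t' ht' using hdt
      obtain rfl : d = fun x => y (l (h' x).1) * star (vv _ (t' x)) := funext ht'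
      rw [← tensorSum_shift φ y l (fun x => vv _ (t x))]
      exact hN _ _ f' h' hbf hbh ⟨g, hg⟩ hd' (fun i => ⟨t i, rfl⟩) fun j => ⟨t' j, rfl⟩
    · rintro d j hdx ⟨γ', hγ', a', b', hdj⟩
      obtain ⟨k, rfl⟩ := hl γ'
      obtain ⟨m, hm⟩ := exists_fresh_row f' k
      choose! b₁ hb₁ using hdx
      exact tensorSum_mem_of_right_factor φ N y l _ d b₁ f' h' j k m hm a' b' hdj hb₁
        fun i hij => IH i k m _ _ _ (hij ▸ hγ')
    · exact fun j => ⟨_, rfl⟩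
  · rintro c i hcx ⟨γ', hγ', a', b', hci⟩
    obtain ⟨k, rfl⟩ := hl γ'
    obtain ⟨m, hm⟩ := exists_fresh_row f' k
    choose! a₁ ha₁ using hcx
    exact tensorSum_mem_of_left_factor φ N y l a₁ c b f' h' i k m hm a' b' hci ha₁
      fun j => IH i k m _ _ _ hγ'
  · exact fun i => ⟨_, rfl⟩

lemma exists_cell_labels {Γ : Type*} {T : Γ → Type*} {mu : Fin r → YoungDiagram}
    (l : Fin r → Γ) (U : MCells mu ≃ Fin n) (P : (γ : Γ) → T γ → A) (c : Fin n → A)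
    (hc : ∀ i, ∃ t : T (l (rowLabel U i).1), c i = P _ t) :
    ∃ τ : ∀ X : MCells mu, T (l X.1), c = fun i => P _ (τ (U.symm i)) := by
  have h : ∀ X : MCells mu, ∃ t : T (l X.1), c (U X) = P _ t := by
    intro X
    have h := hc (U X)
    rwa [rowLabel_apply] at h
  choose τ hτ using h
  exact ⟨τ, funext fun i => by rw [← hτ, Equiv.apply_symm_apply]⟩

lemma domCount_lt_of_rowsBelow_lt {Γ : Type*} [PartialOrder Γ] (l : Fin r → Γ)
    {f f' : Fin n → Fin r × ℕ} (hf : ∀ x, (f' x).1 = (f x).1) (h : rowsBelow f < rowsBelow f') :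
    domCount l f < domCount l f' := by
  refine lt_of_le_not_ge (domCount_le_of_rowsBelow_le l hf h.le) fun hle => h.not_ge ?_
  intro k j
  have h1 := hle k j
  unfold domCount at h1
  simp only [hf] at h1
  exact Nat.le_of_add_le_add_left h1

end Straightening

/-- Let `A` be cyclic cellular and `λ ∈ Λ_n^Γ`.  If `s` is a standard
`λ`-tableau, `v ∈ V^α` and `π ∈ 𝔖_n`, then in `A ≀ 𝔖_n`,
`π · m^λ_{(s,v),(t^λ,1)}` lies in (span of the elements `m^λ_{(u,v'),(t^λ,1)}` with `u`
standard and `v' ∈ V^α`) + `N̄^λ`, where `N̄^λ` is spanned by the Murphy-type basis elements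
indexed by multipartitions `μ` strictly `Γ`-dominating `λ`. -/
theorem stmt_15 {R : Type*} [CommRing R] [IsDomain R] {A : Type*} [Ring A] [Algebra R A]
    {Γ : Type*} [PartialOrder Γ] {T : Γ → Type*} [∀ γ, Fintype (T γ)]
    (D : CellDatum R A Γ T)
    (M : Γ → Type*) [∀ γ, AddCommGroup (M γ)] [∀ γ, Module R (M γ)]
    [∀ γ, Module A (M γ)] [∀ γ, IsScalarTower R A (M γ)]
    (e : ∀ γ, T γ → M γ) (hM : ∀ γ, IsCellModule D γ (M γ) (e γ))
    (δ : ∀ γ, M γ) (hδ : ∀ γ, Submodule.span A {δ γ} = ⊤)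
    (p : ∀ γ, T γ → R) (hp : ∀ γ, ∑ s : T γ, p γ s • e γ s = δ γ)
    (y : Γ → A) (hymem : ∀ γ, y γ ∈ D.Aup γ)
    (hylift : ∀ γ,
      y γ - ∑ s : T γ, ∑ t : T γ, (p γ s * p γ t) • D.c γ s t ∈ D.Abar γ)
    (vv : ∀ γ, T γ → A) (hvv : ∀ γ (t : T γ), vv γ t • δ γ = e γ t)
    {r : ℕ} (l : Fin r → Γ) (hl : Function.Bijective l)
    (hcomp : ∀ i j : Fin r, l j ≤ l i → i ≤ j)
    (n : ℕ) (lam : Fin r → YoungDiagram) (hlam : ∑ k, (lam k).card = n)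
    (tl : MCells lam ≃ Fin n) (htl : IsSuperstandard tl)
    (W : Type*) [Ring W] [Algebra R W]
    (φ : ((⨂[R] _ : Fin n, A) ⊗[R] (Equiv.Perm (Fin n) →₀ R)) ≃ₗ[R] W)
    (hone : wm φ (fun _ => (1 : A)) 1 = 1)
    (hmul : ∀ (a b : Fin n → A) (π σ : Equiv.Perm (Fin n)),
      wm φ a π * wm φ b σ = wm φ (fun i => a i * b (π⁻¹ i)) (π * σ))
    (starW : W →ₗ[R] W)
    (hsw : ∀ (a : Fin n → A) (π : Equiv.Perm (Fin n)),
      starW (wm φ a π) = wm φ (fun i => D.star (a (π i))) π⁻¹) :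
    ∀ (π : Equiv.Perm (Fin n)) (S : MCells lam ≃ Fin n), IsStdTableau S →
    ∀ τ : ∀ x : MCells lam, T (l x.1),
      sElt φ π * (sElt φ (dperm tl S) * vElt φ vv l tl τ * yaElt φ y l tl * xlamElt φ tl)
        ∈ Submodule.span R
            {x : W | ∃ (U : MCells lam ≃ Fin n) (τ' : ∀ x : MCells lam, T (l x.1)),
              IsStdTableau U ∧
              x = sElt φ (dperm tl U) * vElt φ vv l tl τ' * yaElt φ y l tl * xlamElt φ tl}
          ⊔ Submodule.span R
            {x : W | ∃ mu : Fin r → YoungDiagram, (∑ k, (mu k).card = n) ∧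
              GDomL l mu lam ∧ mu ≠ lam ∧
              ∃ (tm : MCells mu ≃ Fin n), IsSuperstandard tm ∧
              ∃ (U U' : MCells mu ≃ Fin n), IsStdTableau U ∧ IsStdTableau U' ∧
              ∃ (τu τu' : ∀ x : MCells mu, T (l x.1)),
                x = mwElt φ starW y vv l tm U U' τu τu'} := by
  intro π S _ τ
  have : Finite Γ := Finite.of_surjective l hl.2
  have hgen : ∀ γ (t : T γ), vv γ t • ∑ s, p γ s • e γ s = e γ t := fun γ t => by
    rw [hp, hvv]
  have hAbar := D.Abar_le_span_y fun γ s t => D.c_sub_mem (hM γ) (hylift γ) (hgen γ) s t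
  have hleft : ∀ γ a, a * y γ ∈ Submodule.span R ({z | ∃ t, z = vv γ t * y γ} ∪
      {z | ∃ γ', γ < γ' ∧ ∃ a b : A, z = a * y γ' * b}) := by
    intro γ a
    obtain ⟨q, hq⟩ := D.exists_mul_y_sub_mem (hM γ) (hylift γ) (hgen γ) a
    refine (Submodule.sub_mem_iff_left _ ?_).1
      (Submodule.span_mono Set.subset_union_right (hAbar γ hq))
    exact Submodule.sum_mem _ fun t _ => Submodule.smul_mem _ _
      (Submodule.subset_span (Or.inl ⟨t, rfl⟩))
  have hright : ∀ γ b, y γ * b ∈ Submodule.span R ({z | ∃ t, z = y γ * D.star (vv γ t)} ∪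
      {z | ∃ γ', γ < γ' ∧ ∃ a b : A, z = a * y γ' * b}) := by
    intro γ b
    obtain ⟨q, hq⟩ := D.exists_y_mul_sub_mem (hM γ) (hylift γ) (hgen γ) b
    refine (Submodule.sub_mem_iff_left _ ?_).1
      (Submodule.span_mono Set.subset_union_right (hAbar γ hq))
    exact Submodule.sum_mem _ fun t _ => Submodule.smul_mem _ _
      (Submodule.subset_span (Or.inl ⟨t, rfl⟩))
  have hπ : sElt φ π * sElt φ (dperm tl S) = sElt φ (dperm tl (S.trans π)) := by
    unfold sElt
    rw [hmul]
    simp only [mul_one]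
    rfl
  rw [← mul_assoc, ← mul_assoc, ← mul_assoc, hπ]
  rw [sElt_mul_eq_tensorSum_one φ hone hmul]
  set f := rowLabel (S.trans π) with hf
  refine labelSum_mem_of_left _ _ (rowLabel tl) f ?_ ?_
  · intro f' hbf hcf hg
    obtain ⟨g, hg⟩ := hg
    obtain ⟨U, hU, rfl⟩ := exists_isStdTableau_of_isBallot (mu := lam) hbf fun k i => by
      rw [card_label_comp_perm hg, card_rowLabel_eq]
    obtain ⟨τ', hτ'⟩ := exists_cell_labels l U (fun γ t => vv γ t * y γ)
      (fun i => vv (l ((S.trans π).symm i).1) (τ ((S.trans π).symm i)) *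
        y (l ((S.trans π).symm i).1))
      (fun i => by
        rw [hcf]
        exact ⟨_, rfl⟩)
    refine Submodule.mem_sup_left (Submodule.subset_span ⟨U, τ', hU, ?_⟩)
    rw [sElt_mul_eq_tensorSum_one φ hone hmul]
    exact congrArg (fun c => tensorSum φ c (fun _ => 1) (rowLabel U) (rowLabel tl)) hτ'
  · intro f' h' hr _
    have hlt : domCount l (rowLabel tl) < domCount l f' := by
      have h0 : domCount l (rowLabel tl) = domCount l f := by
        funext k j
        rw [hf, domCount_rowLabel, domCount_rowLabel]
      rw [h0]
      exact domCount_lt_of_rowsBelow_lt l hr.1 hr.2.1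
    set a : Fin n → A := fun i => vv (l ((S.trans π).symm i).1) (τ ((S.trans π).symm i))
    have hc : (fun i => vv (l ((S.trans π).symm i).1) (τ ((S.trans π).symm i)) *
        y (l ((S.trans π).symm i).1)) = fun i =>
          a i * y (l (f' i).1) := by
      funext i
      rw [hr.1]
      rfl
    rw [hc]
    refine Submodule.mem_sup_right ?_
    change tensorSum φ (fun i => a i * y (l (f' i).1)) (fun _ => 1) f' h' ∈ _
    refine tensorSum_mem_of_lt_domCount φ _ D.star y vv l hl.2 hcomp hleft hright
      (domCount l (rowLabel tl)) ?_ a (fun _ => 1) f' h' hlt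
    rintro c d f₁ h₁ hbf hbh ⟨g, hg⟩ hd hc hd'
    obtain ⟨mu, hmu⟩ := exists_youngDiagram_of_isBallot hbf
    obtain ⟨U, hU, rfl⟩ := exists_isStdTableau_of_isBallot hbf hmu
    obtain ⟨U', hU', rfl⟩ := exists_isStdTableau_of_isBallot (mu := mu) hbh fun k i => by
      rw [← card_label_comp_perm hg, hmu]
    obtain ⟨tm, htm⟩ := exists_isSuperstandard U
    obtain ⟨τu, hτu⟩ := exists_cell_labels l U (fun γ t => vv γ t * y γ) c hc
    obtain ⟨τu', hτu'⟩ := exists_cell_labels l U' (fun γ t => D.star (vv γ t)) d hd'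
    refine Submodule.subset_span ⟨mu, sum_card_eq U, fun k j => ?_, ?_, tm, htm, U, U', hU, hU',
      τu, τu', ?_⟩
    · rw [← domCount_rowLabel l tl, ← domCount_rowLabel l U]
      exact hd.le k j
    · rintro rfl
      refine hd.ne ?_
      funext k j
      rw [domCount_rowLabel, domCount_rowLabel]
    · rw [mwElt_eq_tensorSum φ D hmul starW hsw, hτu, hτu']
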